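/- arXiv:1602.08896 — 3 statements merged into one kernel-verified Lean document; each statement's English description precedes it below -/
import Mathlib

section
/- Let N ≥ 1 and let P be a 2N×2N complex matrix satisfying: (i) P*S = SP; (ii) SP positive semidefinite; (iii) P + K·P̄·K = 1, where S = diag(1,−1) in N×N blocks, K is the block swap [[0,1],[1,0]], and P̄ is the entrywise conjugate. Then there exist N×N complex matrices U, V such that the block matrix φ = [[U, V̄],[V, Ū]] satisfies φSφ* = S (so φ is a Bogoliubov transformation), and a diagonal real N×N matrix ρ with nonnegative entries, such that φ*·P·(φ*)⁻¹ equals the block-diagonal matrix [[1+ρ, 0],[0, −ρ]]. -/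
open Matrix
open scoped ComplexOrder

/-- Entrywise complex conjugate of a matrix. -/
def matConj {m n : Type*} (M : Matrix m n ℂ) : Matrix m n ℂ := M.map (starRingEnd ℂ)

lemma matConj_mul {l m n : Type*} [Fintype m] (A : Matrix l m ℂ) (B : Matrix m n ℂ) :
    matConj (A * B) = matConj A * matConj B := by
  unfold matConj; exact Matrix.map_mul

lemma matConj_matConj {m n : Type*} (A : Matrix m n ℂ) : matConj (matConj A) = A := by
  ext i j; simp [matConj]

lemma matConj_conjTranspose {m n : Type*} (A : Matrix m n ℂ) :
    matConj Aᴴ = (matConj A)ᴴ := by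
  ext i j; simp [matConj]

lemma matConj_one {n : Type*} [DecidableEq n] : matConj (1 : Matrix n n ℂ) = 1 := by
  simp [matConj]

lemma matConj_sub {m n : Type*} (A B : Matrix m n ℂ) :
    matConj (A - B) = matConj A - matConj B := by
  ext i j; simp [matConj]

lemma matConj_diag {n : Type*} [DecidableEq n] (d : n → ℝ) :
    matConj (Matrix.diagonal (fun i => (d i : ℂ))) = Matrix.diagonal (fun i => (d i : ℂ)) := by
  ext i j; by_cases h : i = j <;> simp [matConj, h]

lemma diag_conjT {n : Type*} [DecidableEq n] (d : n → ℝ) :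
    (Matrix.diagonal (fun i => (d i : ℂ)))ᴴ = Matrix.diagonal (fun i => (d i : ℂ)) := by
  ext i j; by_cases h : i = j
  · subst h; simp
  · simp [h, Ne.symm h]

/-- Simultaneous diagonalization of a positive definite and a Hermitian invertible form. -/
lemma exists_simul {n : Type*} [Fintype n] [DecidableEq n] (H S : Matrix n n ℂ)
    (hH : H.PosSemidef) (hHu : IsUnit H) (hS : S.IsHermitian) (hSu : IsUnit S) :
    ∃ (B : Matrix n n ℂ) (lam : n → ℝ), (∀ i, lam i ≠ 0) ∧ Bᴴ * H * B = 1 ∧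
      S * B = H * B * Matrix.diagonal (fun i => (lam i : ℂ)) := by
  obtain ⟨C, hC⟩ : ∃ C : Matrix n n ℂ, H = Cᴴ * C := by
    open scoped MatrixOrder in
    exact CStarAlgebra.nonneg_iff_eq_star_mul_self.mp hH.nonneg
  have hCu : IsUnit C := by
    rw [hC] at hHu
    rw [Matrix.isUnit_iff_isUnit_det] at hHu ⊢
    rw [Matrix.det_mul] at hHu
    exact isUnit_of_mul_isUnit_right hHu
  have hCd : IsUnit C.det := (Matrix.isUnit_iff_isUnit_det _).1 hCu
  have hCC : C * C⁻¹ = 1 := Matrix.mul_nonsing_inv _ hCd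
  have hCC' : (C⁻¹)ᴴ * Cᴴ = 1 := by
    rw [← Matrix.conjTranspose_mul, hCC, Matrix.conjTranspose_one]
  have hCC2 : Cᴴ * (C⁻¹)ᴴ = 1 := by
    rw [← Matrix.conjTranspose_mul, Matrix.nonsing_inv_mul _ hCd, Matrix.conjTranspose_one]
  have hM : ((C⁻¹)ᴴ * S * C⁻¹).IsHermitian := Matrix.isHermitian_conjTranspose_mul_mul _ hS
  let E : Matrix n n ℂ := hM.eigenvectorUnitary
  have hE : Eᴴ * E = 1 := Unitary.coe_star_mul_self hM.eigenvectorUnitary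
  have hE2 : E * Eᴴ = 1 := Unitary.coe_mul_star_self hM.eigenvectorUnitary
  have hME : ((C⁻¹)ᴴ * S * C⁻¹) * E =
      E * Matrix.diagonal (fun i => (hM.eigenvalues i : ℂ)) := by
    have h := hM.spectral_theorem
    rw [Unitary.conjStarAlgAut_apply] at h
    have h' : ((C⁻¹)ᴴ * S * C⁻¹) =
      E * Matrix.diagonal (fun i => (hM.eigenvalues i : ℂ)) * Eᴴ := h
    have h2 := congrArg (· * E) h'
    simp only [Matrix.mul_assoc _ Eᴴ E, hE, Matrix.mul_one] at h2
    exact h2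
  have key : S * (C⁻¹ * E) =
      H * (C⁻¹ * E) * Matrix.diagonal (fun i => (hM.eigenvalues i : ℂ)) := by
    have h : Cᴴ * (((C⁻¹)ᴴ * S * C⁻¹) * E) =
      Cᴴ * (E * Matrix.diagonal (fun i => (hM.eigenvalues i : ℂ))) := by rw [hME]
    have e1 : Cᴴ * (((C⁻¹)ᴴ * S * C⁻¹) * E) = (Cᴴ * (C⁻¹)ᴴ) * S * (C⁻¹ * E) := by
      simp only [Matrix.mul_assoc]
    have e2 : H * (C⁻¹ * E) * Matrix.diagonal (fun i => (hM.eigenvalues i : ℂ)) =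
      Cᴴ * (C * C⁻¹) * (E * Matrix.diagonal (fun i => (hM.eigenvalues i : ℂ))) := by
      rw [hC]; simp only [Matrix.mul_assoc]
    rw [e1, hCC2, Matrix.one_mul] at h
    rw [e2, hCC, Matrix.mul_one, h]
  refine ⟨C⁻¹ * E, hM.eigenvalues, ?_, ?_, key⟩
  · have hu : IsUnit ((C⁻¹)ᴴ * S * C⁻¹) := by
      have h1 : IsUnit C⁻¹ := (Matrix.isUnit_nonsing_inv_iff).2 hCu
      exact (h1.star.mul hSu).mul h1
    have hd := ((Matrix.isUnit_iff_isUnit_det _).1 hu).ne_zero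
    rw [hM.det_eq_prod_eigenvalues] at hd
    intro i hi
    exact hd (Finset.prod_eq_zero (Finset.mem_univ i) (by simp [hi]))
  · have : (C⁻¹ * E)ᴴ * H * (C⁻¹ * E) = Eᴴ * ((C⁻¹)ᴴ * Cᴴ) * (C * C⁻¹) * E := by
      rw [hC, Matrix.conjTranspose_mul]; simp only [Matrix.mul_assoc]
    rw [this, hCC, hCC', Matrix.mul_one, Matrix.mul_one, hE]

lemma pair_rel {n ι : Type*} [Fintype n] [DecidableEq n] [Fintype ι] [DecidableEq ι]
    (H S K : Matrix n n ℂ) (hH : Hᴴ = H) (hS : Sᴴ = S) (hKK : K * K = 1) (hKh : Kᴴ = K)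
    (hKH : H * K = K * matConj H) (hKS : S * K = - (K * matConj S))
    (B : Matrix n ι ℂ) (lam : ι → ℝ) (hlam : ∀ i j, lam i + lam j ≠ 0)
    (h1 : Bᴴ * H * B = 1) (h2 : S * B = H * B * Matrix.diagonal (fun i => (lam i : ℂ))) :
    (K * matConj B)ᴴ * H * (K * matConj B) = 1 ∧
    Bᴴ * H * (K * matConj B) = 0 ∧ (K * matConj B)ᴴ * H * B = 0 ∧
    Bᴴ * S * B = Matrix.diagonal (fun i => (lam i : ℂ)) ∧
    (K * matConj B)ᴴ * S * (K * matConj B) = - Matrix.diagonal (fun i => (lam i : ℂ)) ∧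
    Bᴴ * S * (K * matConj B) = 0 ∧ (K * matConj B)ᴴ * S * B = 0 := by
  set L : Matrix ι ι ℂ := Matrix.diagonal (fun i => (lam i : ℂ)) with hL
  set F := K * matConj B with hF
  have hLh : Lᴴ = L := diag_conjT lam
  have hLc : matConj L = L := matConj_diag lam
  have hHF : H * F = K * matConj (H * B) := by
    rw [hF, ← Matrix.mul_assoc, hKH, matConj_mul, Matrix.mul_assoc]
  have hSF : S * F = - (H * F * L) := by
    rw [hHF, hF, ← Matrix.mul_assoc, hKS, Matrix.neg_mul, Matrix.mul_assoc, ← matConj_mul, h2,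
      matConj_mul _ L, hLc, Matrix.mul_assoc]
  have a1 : Fᴴ * H * F = 1 := by
    rw [Matrix.mul_assoc, hHF, hF, Matrix.conjTranspose_mul, hKh, Matrix.mul_assoc,
      ← Matrix.mul_assoc K K, hKK, Matrix.one_mul, ← matConj_conjTranspose, ← matConj_mul,
      ← Matrix.mul_assoc, h1, matConj_one]
  have hBS : Bᴴ * S = L * (Bᴴ * H) := by
    have := congrArg Matrix.conjTranspose h2
    simpa only [Matrix.conjTranspose_mul, hS, hH, hLh] using this
  have a2 : Bᴴ * H * F = 0 := by
    have e1 : Bᴴ * S * F = L * (Bᴴ * H * F) := by rw [hBS, Matrix.mul_assoc]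
    have e2 : Bᴴ * S * F = - ((Bᴴ * H * F) * L) := by
      rw [Matrix.mul_assoc, hSF, Matrix.mul_neg]; simp only [Matrix.mul_assoc]
    rw [e1] at e2
    ext i j
    have e3 := congrFun (congrFun e2 i) j
    rw [hL, Matrix.neg_apply, Matrix.diagonal_mul, Matrix.mul_diagonal] at e3
    have e4 : ((lam i + lam j : ℝ) : ℂ) * (Bᴴ * H * F) i j = 0 := by
      push_cast; linear_combination e3
    rcases mul_eq_zero.1 e4 with h | h
    · exact absurd (Complex.ofReal_eq_zero.1 h) (hlam i j)
    · simpa using h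
  have a3 : Fᴴ * H * B = 0 := by
    have := congrArg Matrix.conjTranspose a2
    simpa only [Matrix.conjTranspose_mul, hH, Matrix.conjTranspose_conjTranspose,
      Matrix.conjTranspose_zero, Matrix.mul_assoc] using this
  refine ⟨a1, a2, a3, ?_, ?_, ?_, ?_⟩
  · rw [hBS, Matrix.mul_assoc, h1, Matrix.mul_one]
  · rw [Matrix.mul_assoc, hSF, Matrix.mul_neg, ← Matrix.mul_assoc, ← Matrix.mul_assoc, a1,
      Matrix.one_mul]
  · rw [hBS, Matrix.mul_assoc, a2, Matrix.mul_zero]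
  · rw [Matrix.mul_assoc, h2, ← Matrix.mul_assoc, ← Matrix.mul_assoc, a3, Matrix.zero_mul]

lemma sub_rel {n ι : Type*} [Fintype n] [DecidableEq n] [Fintype ι] [DecidableEq ι]
    (H S B : Matrix n n ℂ) (lam : n → ℝ)
    (h1 : Bᴴ * H * B = 1) (h2 : S * B = H * B * Matrix.diagonal (fun i => (lam i : ℂ)))
    (e : ι → n) (he : Function.Injective e) :
    (B.submatrix id e)ᴴ * H * (B.submatrix id e) = 1 ∧
    S * (B.submatrix id e) =
      H * (B.submatrix id e) * Matrix.diagonal (fun i => (lam (e i) : ℂ)) := by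
  have hs : ∀ X : Matrix n n ℂ, X * B.submatrix id e = (X * B).submatrix id e := by
    intro X; ext i j; simp [Matrix.mul_apply]
  constructor
  · have : (B.submatrix id e)ᴴ * H * (B.submatrix id e) = (Bᴴ * H * B).submatrix e e := by
      ext i j; simp [Matrix.mul_apply]
    rw [this, h1, Matrix.submatrix_one _ he]
  · rw [hs, hs, h2]
    ext i j
    simp [Matrix.mul_diagonal]

lemma pair_card {n ι : Type*} [Fintype n] [DecidableEq n] [Fintype ι] [DecidableEq ι]
    (H : Matrix n n ℂ) (B F : Matrix n ι ℂ) (h1 : Bᴴ * H * B = 1) (h2 : Fᴴ * H * F = 1)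
    (h3 : Bᴴ * H * F = 0) (h4 : Fᴴ * H * B = 0) :
    2 * Fintype.card ι ≤ Fintype.card n := by
  have h : (Matrix.fromRows Bᴴ Fᴴ * H) * Matrix.fromCols B F = 1 := by
    rw [Matrix.fromRows_mul, Matrix.fromRows_mul_fromCols, h1, h2, h3, h4, Matrix.fromBlocks_one]
  have := Matrix.rank_mul_le_right (Matrix.fromRows Bᴴ Fᴴ * H) (Matrix.fromCols B F)
  rw [h, Matrix.rank_one, Fintype.card_sum] at this
  have := this.trans (Matrix.rank_le_card_height _)
  omega

/-- Complex (bosonic) form of Williamson's theorem. -/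
lemma williamson (N : ℕ) (H S K : Matrix (Fin N ⊕ Fin N) (Fin N ⊕ Fin N) ℂ)
    (hHp : H.PosSemidef) (hHu : IsUnit H) (hS : Sᴴ = S) (hSu : IsUnit S)
    (hKK : K * K = 1) (hKh : Kᴴ = K)
    (hKH : H * K = K * matConj H) (hKS : S * K = - (K * matConj S)) :
    ∃ (B : Matrix (Fin N ⊕ Fin N) (Fin N) ℂ) (lam : Fin N → ℝ), (∀ i, 0 < lam i) ∧
    Bᴴ * H * B = 1 ∧ (K * matConj B)ᴴ * H * (K * matConj B) = 1 ∧
    Bᴴ * H * (K * matConj B) = 0 ∧ (K * matConj B)ᴴ * H * B = 0 ∧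
    Bᴴ * S * B = Matrix.diagonal (fun i => (lam i : ℂ)) ∧
    (K * matConj B)ᴴ * S * (K * matConj B) = - Matrix.diagonal (fun i => (lam i : ℂ)) ∧
    Bᴴ * S * (K * matConj B) = 0 ∧ (K * matConj B)ᴴ * S * B = 0 := by
  obtain ⟨B, lam, hlam, h1, h2⟩ := exists_simul H S hHp hHu hS hSu
  have hH : Hᴴ = H := hHp.isHermitian
  have hpos : 2 * Fintype.card {i // 0 < lam i} ≤ Fintype.card (Fin N ⊕ Fin N) := by
    obtain ⟨b1, b2⟩ := sub_rel H S B lam h1 h2 (fun i : {i // 0 < lam i} => i.1)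
      Subtype.val_injective
    obtain ⟨c1, c2, c3, -⟩ := pair_rel H S K hH hS hKK hKh hKH hKS _ _
      (fun i j => (add_pos i.2 j.2).ne') b1 b2
    exact pair_card H _ _ b1 c1 c2 c3
  have hneg : 2 * Fintype.card {i // ¬ 0 < lam i} ≤ Fintype.card (Fin N ⊕ Fin N) := by
    obtain ⟨b1, b2⟩ := sub_rel H S B lam h1 h2 (fun i : {i // ¬ 0 < lam i} => i.1)
      Subtype.val_injective
    have hl : ∀ i : {i // ¬ 0 < lam i}, lam i.1 < 0 := fun i =>
      lt_of_le_of_ne (not_lt.1 i.2) (hlam _)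
    obtain ⟨c1, c2, c3, -⟩ := pair_rel H S K hH hS hKK hKh hKH hKS _ _
      (fun i j => (add_neg (hl i) (hl j)).ne) b1 b2
    exact pair_card H _ _ b1 c1 c2 c3
  have hcompl := Fintype.card_subtype_compl (fun i => 0 < lam i)
  have hle := Fintype.card_subtype_le (fun i => 0 < lam i)
  rw [Fintype.card_sum, Fintype.card_fin] at *
  have hc : Fintype.card (Fin N) = Fintype.card {i // 0 < lam i} := by
    rw [Fintype.card_fin]; omega
  let e := Fintype.equivOfCardEq hc
  obtain ⟨b1, b2⟩ := sub_rel H S B lam h1 h2 (fun i : Fin N => (e i).1)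
    (Subtype.val_injective.comp e.injective)
  exact ⟨_, fun i => lam (e i).1, fun i => (e i).2, b1,
    pair_rel H S K hH hS hKK hKh hKH hKS _ _
      (fun i j => (add_pos (e i).2 (e j).2).ne') b1 b2⟩

lemma sandwich {n ι : Type*} [Fintype n] [Fintype ι] (X : Matrix n n ℂ) (B F : Matrix n ι ℂ)
    (L : Matrix ι ι ℂ) (hL : Lᴴ = L) :
    (Matrix.fromCols (B * L) (F * L))ᴴ * X * Matrix.fromCols (B * L) (F * L) =
      Matrix.fromBlocks (L * (Bᴴ * X * B) * L) (L * (Bᴴ * X * F) * L)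
        (L * (Fᴴ * X * B) * L) (L * (Fᴴ * X * F) * L) := by
  rw [Matrix.conjTranspose_fromCols_eq_fromRows_conjTranspose, Matrix.fromRows_mul,
    Matrix.fromRows_mul_fromCols]
  simp only [Matrix.conjTranspose_mul, hL, Matrix.mul_assoc]

lemma shape (N : ℕ) (B : Matrix (Fin N ⊕ Fin N) (Fin N) ℂ) (l : Fin N → ℝ) :
    Matrix.fromBlocks (B.toRows₁ * Matrix.diagonal (fun i => (l i : ℂ)))
      (matConj (-(B.toRows₂ * Matrix.diagonal (fun i => (l i : ℂ)))))
      (-(B.toRows₂ * Matrix.diagonal (fun i => (l i : ℂ))))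
      (matConj (B.toRows₁ * Matrix.diagonal (fun i => (l i : ℂ)))) =
    (Matrix.fromBlocks 1 0 0 (-1) : Matrix (Fin N ⊕ Fin N) (Fin N ⊕ Fin N) ℂ) *
      Matrix.fromCols (B * Matrix.diagonal (fun i => (l i : ℂ)))
        (((Matrix.fromBlocks 0 1 1 0 : Matrix (Fin N ⊕ Fin N) (Fin N ⊕ Fin N) ℂ) * matConj B) * Matrix.diagonal (fun i => (l i : ℂ))) *
      (Matrix.fromBlocks 1 0 0 (-1) : Matrix (Fin N ⊕ Fin N) (Fin N ⊕ Fin N) ℂ) := by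
  have hB : B = Matrix.fromRows B.toRows₁ B.toRows₂ := (Matrix.fromRows_toRows B).symm
  have hc : matConj B = Matrix.fromRows (matConj B.toRows₁) (matConj B.toRows₂) := by
    ext (i | i) j <;> simp [matConj, Matrix.toRows₁, Matrix.toRows₂]
  have hn : ∀ X : Matrix (Fin N) (Fin N) ℂ, matConj (-X) = - matConj X := by
    intro X; ext i j; simp [matConj]
  have hfb : ∀ X Y Z W : Matrix (Fin N) (Fin N) ℂ,
      Matrix.fromCols (Matrix.fromRows X Y) (Matrix.fromRows Z W) = Matrix.fromBlocks X Z Y W := by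
    intro X Y Z W
    ext (i | i) (j | j) <;> simp
  rw [hc]
  generalize B.toRows₁ = B1 at *
  generalize B.toRows₂ = B2 at *
  rw [hB]
  rw [Matrix.fromBlocks_mul_fromRows, Matrix.fromRows_mul, Matrix.fromRows_mul, hfb,
    Matrix.fromBlocks_multiply, Matrix.fromBlocks_multiply, hn, matConj_mul, matConj_mul,
    matConj_diag]
  simp

theorem quasifree_diagonalization (N : ℕ) (hN : 1 ≤ N)
    (P : Matrix (Fin N ⊕ Fin N) (Fin N ⊕ Fin N) ℂ)
    (S : Matrix (Fin N ⊕ Fin N) (Fin N ⊕ Fin N) ℂ)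
    (hS : S = Matrix.fromBlocks 1 0 0 (-1))
    (K : Matrix (Fin N ⊕ Fin N) (Fin N ⊕ Fin N) ℂ)
    (hK : K = Matrix.fromBlocks 0 1 1 0)
    (h1 : Pᴴ * S = S * P)
    (h2 : (S * P).PosSemidef)
    (h3 : P + K * matConj P * K = 1) :
    ∃ (U V : Matrix (Fin N) (Fin N) ℂ) (ρ : Fin N → ℝ),
      (∀ i, 0 ≤ ρ i) ∧
      (Matrix.fromBlocks U (matConj V) V (matConj U)) * S *
          (Matrix.fromBlocks U (matConj V) V (matConj U))ᴴ = S ∧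
      (Matrix.fromBlocks U (matConj V) V (matConj U))ᴴ * P *
          ((Matrix.fromBlocks U (matConj V) V (matConj U))ᴴ)⁻¹ =
        Matrix.fromBlocks (1 + Matrix.diagonal (fun i => (ρ i : ℂ))) 0 0
          (-(Matrix.diagonal (fun i => (ρ i : ℂ)))) := by
  have hSS : S * S = 1 := by
    rw [hS, Matrix.fromBlocks_multiply]; simp
  have hKK : K * K = 1 := by
    rw [hK, Matrix.fromBlocks_multiply]; simp
  have hSh : Sᴴ = S := by
    rw [hS, Matrix.fromBlocks_conjTranspose]; simp
  have hKh : Kᴴ = K := by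
    rw [hK, Matrix.fromBlocks_conjTranspose]; simp
  have hSc : matConj S = S := by
    rw [hS, matConj, Matrix.fromBlocks_map]; simp [Matrix.map_neg]
  have hKc : matConj K = K := by
    rw [hK, matConj, Matrix.fromBlocks_map]; simp
  have hSK : S * K = -(K * S) := by
    rw [hS, hK, Matrix.fromBlocks_multiply, Matrix.fromBlocks_multiply, Matrix.fromBlocks_neg]
    simp
  have hSu : IsUnit S := IsUnit.of_mul_eq_one _ hSS
  have hA'eq : K * matConj (S * P) * K = S * P - S := by
    have e : K * matConj P * K = 1 - P := by rw [← h3]; abel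
    have e2 : K * S = -(S * K) := by rw [hSK, neg_neg]
    rw [matConj_mul, hSc, ← Matrix.mul_assoc, e2]
    have : -(S * K) * matConj P * K = -(S * (K * matConj P * K)) := by
      simp only [Matrix.neg_mul, Matrix.mul_assoc]
    rw [this, e, Matrix.mul_sub, Matrix.mul_one, neg_sub]
  have hA' : (K * matConj (S * P) * K).PosSemidef := by
    have e : matConj (S * P) = (S * P)ᵀ := by
      ext i j
      have := congrFun (congrFun h2.isHermitian.eq j) i
      rw [Matrix.conjTranspose_apply] at this
      exact this
    rw [e]
    have := h2.transpose.conjTranspose_mul_mul_same K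
    rwa [hKh] at this
  obtain ⟨A, hA⟩ : ∃ A, A = S * P := ⟨_, rfl⟩
  rw [← hA] at h2 hA' hA'eq
  obtain ⟨H, hH⟩ : ∃ H, H = A + K * matConj A * K := ⟨_, rfl⟩
  have hHp : H.PosSemidef := hH ▸ h2.add hA'
  have hHA : H + S = A + A := by rw [hH, hA'eq]; abel
  have hHu : IsUnit H := by
    rw [← Matrix.mulVec_injective_iff_isUnit]
    rw [← Matrix.coe_mulVecLin, ← LinearMap.ker_eq_bot, LinearMap.ker_eq_bot']
    intro x hx
    have hx' : H *ᵥ x = 0 := hx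
    have q1 := h2.dotProduct_mulVec_nonneg x
    have q2 := hA'.dotProduct_mulVec_nonneg x
    have q3 : star x ⬝ᵥ (A *ᵥ x) + star x ⬝ᵥ ((K * matConj A * K) *ᵥ x) = 0 := by
      rw [← dotProduct_add, ← Matrix.add_mulVec, ← hH, hx', dotProduct_zero]
    have q4 := (add_eq_zero_iff_of_nonneg q1 q2).1 q3
    have r1 := (h2.dotProduct_mulVec_zero_iff x).1 q4.1
    have r2 := (hA'.dotProduct_mulVec_zero_iff x).1 q4.2
    rw [hA'eq, Matrix.sub_mulVec, r1, zero_sub, neg_eq_zero] at r2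
    have : S *ᵥ (S *ᵥ x) = 0 := by rw [r2, Matrix.mulVec_zero]
    rwa [Matrix.mulVec_mulVec, hSS, Matrix.one_mulVec] at this
  have hKH : H * K = K * matConj H := by
    have e : matConj H = matConj A + K * A * K := by
      have : matConj (A + K * matConj A * K) = matConj A + matConj (K * matConj A * K) := by
        ext i j; simp only [matConj, Matrix.map_apply, Matrix.add_apply, map_add]
      rw [hH, this, matConj_mul, matConj_mul, matConj_matConj, hKc]
    rw [e, hH, Matrix.add_mul, Matrix.mul_add, Matrix.mul_assoc _ K K, hKK, Matrix.mul_one,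
      Matrix.mul_assoc K A K, ← Matrix.mul_assoc K K, hKK, Matrix.one_mul, add_comm]
  obtain ⟨B, lam, hlam, b1, b2, b3, b4, b5, b6, b7, b8⟩ :=
    williamson N H S K hHp hHu hSh hSu hKK hKh hKH (by rw [hSc, hSK])
  obtain ⟨l, hl⟩ : ∃ l : Fin N → ℝ, l = fun i => (Real.sqrt (lam i))⁻¹ := ⟨_, rfl⟩
  have hll : ∀ i, l i * l i = (lam i)⁻¹ := by
    intro i
    rw [hl]; simp only
    rw [← mul_inv, Real.mul_self_sqrt (hlam i).le]
  obtain ⟨ρ, hρ⟩ : ∃ ρ : Fin N → ℝ, ρ = fun i => ((lam i)⁻¹ - 1) / 2 := ⟨_, rfl⟩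
  obtain ⟨L, hL⟩ : ∃ L : Matrix (Fin N) (Fin N) ℂ, L = Matrix.diagonal (fun i => (l i : ℂ)) :=
    ⟨_, rfl⟩
  have hLh : Lᴴ = L := by rw [hL]; exact diag_conjT l
  have hLL : L * L = 1 + 2 • Matrix.diagonal (fun i => (ρ i : ℂ)) := by
    rw [hL, Matrix.diagonal_mul_diagonal, ← Matrix.diagonal_one, ← Matrix.diagonal_smul,
      Matrix.diagonal_add]
    congr 1
    ext i
    rw [← Complex.ofReal_mul, hll, hρ]
    simp
    ring
  have hLDL : L * Matrix.diagonal (fun i => (lam i : ℂ)) * L = 1 := by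
    rw [hL, Matrix.diagonal_mul_diagonal, Matrix.diagonal_mul_diagonal, ← Matrix.diagonal_one]
    congr 1
    ext i
    have : l i * lam i * l i = 1 := by
      rw [mul_right_comm, hll, inv_mul_cancel₀ (hlam i).ne']
    exact_mod_cast this
  obtain ⟨Ψ, hΨ⟩ : ∃ Ψ : Matrix (Fin N ⊕ Fin N) (Fin N ⊕ Fin N) ℂ,
    Ψ = Matrix.fromCols (B * L) ((K * matConj B) * L) := ⟨_, rfl⟩
  have hΨH : Ψᴴ * H * Ψ = Matrix.fromBlocks (L * L) 0 0 (L * L) := by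
    rw [hΨ, sandwich _ _ _ _ hLh, b1, b2, b3, b4]; simp
  have hΨS : Ψᴴ * S * Ψ = S := by
    rw [hΨ, sandwich _ _ _ _ hLh, b5, b6, b7, b8, Matrix.mul_neg, Matrix.neg_mul, hLDL]
    simp [hS]
  have hΨA : Ψᴴ * A * Ψ = Matrix.fromBlocks (1 + Matrix.diagonal (fun i => (ρ i : ℂ))) 0 0
          (Matrix.diagonal (fun i => (ρ i : ℂ))) := by
    have e : Ψᴴ * A * Ψ + Ψᴴ * A * Ψ = Matrix.fromBlocks (L * L) 0 0 (L * L) + S := by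
      have e0 : Ψᴴ * H * Ψ + Ψᴴ * S * Ψ = Matrix.fromBlocks (L * L) 0 0 (L * L) + S := by
        rw [hΨH, hΨS]
      rw [← e0, ← Matrix.add_mul, ← Matrix.mul_add, ← Matrix.add_mul, ← Matrix.mul_add, hHA]
    rw [hLL, hS, Matrix.fromBlocks_add] at e
    have e2 : (2 : ℂ) • (Ψᴴ * A * Ψ) = (2 : ℂ) •
        Matrix.fromBlocks (1 + Matrix.diagonal (fun i => (ρ i : ℂ))) 0 0
          (Matrix.diagonal (fun i => (ρ i : ℂ))) := by
      rw [two_smul ℂ (Ψᴴ * A * Ψ), e, two_smul ℂ, Matrix.fromBlocks_add]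
      congr 1
      · rw [two_smul]; abel
      · rw [two_smul]; abel
    exact smul_right_injective _ (two_ne_zero' ℂ) e2
  have hφ := shape N B l
  rw [← hS, ← hK, ← hL, ← hΨ] at hφ
  have hΨinv : Ψ * (S * Ψᴴ * S) = 1 := by
    apply mul_eq_one_comm.1
    rw [Matrix.mul_assoc, Matrix.mul_assoc S, ← Matrix.mul_assoc Ψᴴ, hΨS, hSS]
  have hφh : (S * Ψ * S)ᴴ = S * Ψᴴ * S := by
    simp only [Matrix.conjTranspose_mul, hSh, Matrix.mul_assoc]
  refine ⟨B.toRows₁ * L, -(B.toRows₂ * L), ρ, ?_, ?_, ?_⟩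
  · intro i
    have hp := h2.conjTranspose_mul_mul_same Ψ
    rw [hΨA] at hp
    have := hp.diag_nonneg (i := Sum.inr i)
    simpa using this
  · rw [hφ, hφh]
    have : S * Ψ * S * S * (S * Ψᴴ * S) = S * (Ψ * ((S * S) * (S * Ψᴴ * S))) := by
      simp only [Matrix.mul_assoc]
    rw [this, hSS, Matrix.one_mul, hΨinv, Matrix.mul_one]
  · rw [hφ, hφh, Matrix.inv_eq_left_inv hΨinv]
    have : S * Ψᴴ * S * P * Ψ = S * (Ψᴴ * A * Ψ) := by
      rw [hA]; simp only [Matrix.mul_assoc]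
    rw [this, hΨA, hS, Matrix.fromBlocks_multiply]
    simp
end

section
/- There exist twice differentiable functions x₊, x₋ : ℝ → ℝ satisfying the Weber equation ẍ(t) + t²x(t) = 0 for all t, with x₊ even and x₋ odd, with Wronskian x₊ẋ₋ − ẋ₊x₋ = 1, and real constants c₊, c₋ > 0 with c₊·c₋ = √2, such that as t → +∞: √t·x₊(t) − c₊·cos(t²/2 − π/8) → 0, √t·x₋(t) − c₋·cos(t²/2 − 3π/8) → 0, ẋ₊(t)/√t + c₊·sin(t²/2 − π/8) → 0, and ẋ₋(t)/√t + c₋·sin(t²/2 − 3π/8) → 0. -/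
open Real Filter

open MeasureTheory in
/-- `s^α e^{-s²/2-(1+i)ts}` -/
noncomputable def wk (α t s : ℝ) : ℂ :=
  ((s ^ α * Real.exp (-(s ^ 2 / 2)) : ℝ) : ℂ) * Complex.exp (-((1 + Complex.I) * t * s))

noncomputable def wI (α t : ℝ) : ℂ := ∫ s in Set.Ioi (0:ℝ), wk α t s

lemma wk_norm (α t s : ℝ) (hs : 0 < s) :
    ‖wk α t s‖ = s ^ α * Real.exp (-(s ^ 2 / 2)) * Real.exp (-(t * s)) := by
  rw [wk, norm_mul, Complex.norm_real, Complex.norm_exp, Real.norm_of_nonneg (by positivity)]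
  simp

lemma wk_meas (α t : ℝ) : Measurable (wk α t) := by
  unfold wk; fun_prop

lemma wk_bound (α t c s : ℝ) (hs : 0 < s) (hc : |t| ≤ c) :
    ‖wk α t s‖ ≤ Real.exp (c ^ 2) * (s ^ α * Real.exp (-(1/4) * s ^ 2)) := by
  rw [wk_norm _ _ _ hs, mul_assoc, ← Real.exp_add, mul_left_comm, ← Real.exp_add]
  have : -(t * s) ≤ c * s := by nlinarith [neg_abs_le t]
  apply mul_le_mul_of_nonneg_left _ (by positivity)
  apply Real.exp_le_exp.mpr
  nlinarith [sq_nonneg (s / 2 - c)]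

lemma wb_int (α c : ℝ) (ha : -1 < α) : MeasureTheory.IntegrableOn
    (fun s => Real.exp (c ^ 2) * (s ^ α * Real.exp (-(1/4) * s ^ 2))) (Set.Ioi 0) :=
  (integrableOn_rpow_mul_exp_neg_mul_sq (by norm_num) ha).const_mul _

lemma wk_int (α t : ℝ) (ha : -1 < α) : MeasureTheory.IntegrableOn (wk α t) (Set.Ioi 0) := by
  refine (wb_int α |t| ha).mono' (wk_meas α t).aestronglyMeasurable ?_
  filter_upwards [MeasureTheory.ae_restrict_mem measurableSet_Ioi] with s hs
  exact wk_bound α t _ s hs le_rfl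

lemma wk_succ (α t s : ℝ) (hs : 0 < s) : wk (α + 1) t s = s * wk α t s := by
  unfold wk
  rw [Real.rpow_add hs, Real.rpow_one]; push_cast; ring

lemma wI_deriv (α t : ℝ) (ha : -1 < α) :
    HasDerivAt (wI α) (-(1 + Complex.I) * wI (α + 1) t) t := by
  have key := hasDerivAt_integral_of_dominated_loc_of_deriv_le
    (μ := MeasureTheory.volume.restrict (Set.Ioi (0:ℝ))) (𝕜 := ℝ) (F := wk α)
    (F' := fun t s => -(1 + Complex.I) * wk (α + 1) t s) (x₀ := t)
    (bound := fun s => ‖(1 + Complex.I)‖ *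
      (Real.exp ((|t| + 1) ^ 2) * (s ^ (α + 1) * Real.exp (-(1/4) * s ^ 2))))
    (Metric.ball_mem_nhds t one_pos)
    (Eventually.of_forall fun x => (wk_meas α x).aestronglyMeasurable)
    (wk_int α t ha)
    ((wk_meas (α + 1) t).const_mul _).aestronglyMeasurable
    (by
      filter_upwards [MeasureTheory.ae_restrict_mem measurableSet_Ioi] with s hs x hx
      rw [norm_mul, norm_neg]
      gcongr
      apply wk_bound _ _ _ _ hs
      rw [Metric.mem_ball, Real.dist_eq] at hx
      have := abs_add_le t (x - t)
      rw [add_sub_cancel] at this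
      linarith)
    ((wb_int (α + 1) _ (by linarith)).const_mul _)
    (by
      filter_upwards [MeasureTheory.ae_restrict_mem measurableSet_Ioi] with s hs x hx
      rw [wk_succ _ _ _ hs]
      unfold wk
      have h1 : HasDerivAt (fun x : ℝ => -((1 + Complex.I) * (x : ℂ) * s))
          (-((1 + Complex.I) * 1 * s)) x :=
        ((Complex.ofRealCLM.hasDerivAt.const_mul _).mul_const _).neg
      refine (h1.cexp.const_mul ((s ^ α * Real.exp (-(s ^ 2 / 2)) : ℝ) : ℂ)).congr_deriv ?_
      ring)
  have := key.2
  rw [MeasureTheory.integral_const_mul] at this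
  exact this

lemma wI_rec (t : ℝ) :
    (1/2 : ℂ) * wI (-1/2) t - wI (3/2) t - (1 + Complex.I) * t * wI (1/2) t = 0 := by
  have hi1 := wk_int (-1/2) t (by norm_num)
  have hi2 := wk_int (1/2) t (by norm_num)
  have hi3 := wk_int (3/2) t (by norm_num)
  have hint : MeasureTheory.IntegrableOn (fun s => (1/2 : ℂ) * wk (-1/2) t s - wk (3/2) t s
      - (1 + Complex.I) * t * wk (1/2) t s) (Set.Ioi 0) :=
    ((hi1.const_mul _).sub hi3).sub (hi2.const_mul _)
  have hd : ∀ s ∈ Set.Ioi (0:ℝ), HasDerivAt (wk (1/2) t)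
      ((1/2 : ℂ) * wk (-1/2) t s - wk (3/2) t s - (1 + Complex.I) * t * wk (1/2) t s) s := by
    intro s hs
    have h1 : HasDerivAt (fun x : ℝ => -((1 + Complex.I) * (t : ℂ) * x))
          (-((1 + Complex.I) * t * 1)) s :=
        (Complex.ofRealCLM.hasDerivAt.const_mul _).neg
    have h2 : HasDerivAt (fun x : ℝ => Real.exp (-(x ^ 2 / 2))) _ s :=
      (((hasDerivAt_id s).pow 2).div_const 2).neg.exp
    have h3 := ((Real.hasDerivAt_rpow_const (p := 1/2) (Or.inl (ne_of_gt hs))).mul h2).ofReal_comp.mul h1.cexp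
    have e1 := wk_succ (1/2) t s hs
    rw [show (1/2 + 1 : ℝ) = 3/2 by norm_num] at e1
    rw [e1]
    refine h3.congr_deriv ?_
    unfold wk
    rw [show (1/2 - 1 : ℝ) = -1/2 by norm_num]
    simp
    ring
  have hc : ContinuousWithinAt (wk (1/2) t) (Set.Ici 0) 0 := by
    apply Continuous.continuousWithinAt
    unfold wk
    have : Continuous (fun s : ℝ => s ^ (1/2:ℝ)) := Real.continuous_rpow_const (by norm_num)
    fun_prop
  have h0 := MeasureTheory.tendsto_zero_of_hasDerivAt_of_integrableOn_Ioi hd hint hi2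
  have := MeasureTheory.integral_Ioi_of_hasDerivAt_of_tendsto hc hd hint h0
  rw [MeasureTheory.integral_sub, MeasureTheory.integral_sub, MeasureTheory.integral_const_mul,
    MeasureTheory.integral_const_mul] at this
  · have hz : wk (1/2) t 0 = 0 := by simp [wk]
    rw [hz, sub_zero] at this
    exact this
  · exact hi1.const_mul _
  · exact hi3
  · exact (hi1.const_mul _).sub hi3
  · exact hi2.const_mul _

noncomputable def wE (t : ℝ) : ℂ := Complex.exp (-(Complex.I * t ^ 2 / 2))

noncomputable def wF (t : ℝ) : ℂ := wE t * wI (-1/2) t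
noncomputable def wG (t : ℝ) : ℂ :=
  wE t * (-(Complex.I * t) * wI (-1/2) t - (1 + Complex.I) * wI (1/2) t)

lemma wE_deriv (t : ℝ) : HasDerivAt wE (-(Complex.I * t) * wE t) t := by
  have h1 : HasDerivAt (fun x : ℝ => -(Complex.I * (x:ℂ) ^ 2 / 2)) _ t :=
    (((Complex.ofRealCLM.hasDerivAt.pow 2).const_mul Complex.I).div_const 2).neg
  refine h1.cexp.congr_deriv ?_
  simp [wE]; ring

lemma wI1 (t : ℝ) : HasDerivAt (wI (-1/2)) (-(1 + Complex.I) * wI (1/2) t) t := by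
  have := wI_deriv (-1/2) t (by norm_num)
  rwa [show (-1/2 + 1 : ℝ) = 1/2 by norm_num] at this

lemma wI2 (t : ℝ) : HasDerivAt (wI (1/2)) (-(1 + Complex.I) * wI (3/2) t) t := by
  have := wI_deriv (1/2) t (by norm_num)
  rwa [show (1/2 + 1 : ℝ) = 3/2 by norm_num] at this

lemma wF_deriv (t : ℝ) : HasDerivAt wF (wG t) t := by
  refine ((wE_deriv t).mul (wI1 t)).congr_deriv ?_
  unfold wG; ring

lemma wG_deriv (t : ℝ) : HasDerivAt wG (-(t ^ 2 * wF t)) t := by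
  have h1 : HasDerivAt (fun x : ℝ => -(Complex.I * (x:ℂ))) _ t :=
    (Complex.ofRealCLM.hasDerivAt.const_mul Complex.I).neg
  refine ((wE_deriv t).mul ((h1.mul (wI1 t)).sub ((wI2 t).const_mul (1 + Complex.I)))).congr_deriv ?_
  have := wI_rec t
  have hI := Complex.I_sq
  simp only [wF, Complex.ofRealCLM_apply, Complex.ofReal_one, Pi.sub_apply, Pi.mul_apply]
  linear_combination (-2 * Complex.I * wE t) * this + (wE t * (t^2 * wI (-1/2) t + wI (3/2) t)) * hI

lemma wgauss (r : ℂ) (hr : 0 < r.re) :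
    ∫ s in Set.Ioi (0:ℝ), ((s ^ (-1/2 : ℝ) : ℝ) : ℂ) * Complex.exp (-(r * s)) = (π / r) ^ (1/2 : ℂ) := by
  rw [← MeasureTheory.integral_comp_rpow_Ioi_of_pos (p := 2) two_pos]
  have h := integral_gaussian_complex_Ioi hr
  have : (π / r) ^ (1/2 : ℂ) = 2 * ∫ (x : ℝ) in Set.Ioi 0, Complex.exp (-r * x ^ 2) := by
    rw [h]; ring
  rw [this, ← MeasureTheory.integral_const_mul]
  refine MeasureTheory.setIntegral_congr_fun measurableSet_Ioi fun x hx => ?_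
  have hx' : (0:ℝ) < x := hx
  have e : (x ^ (2:ℝ)) ^ (-1/2 : ℝ) = x⁻¹ := by
    rw [← Real.rpow_mul hx'.le]; norm_num [Real.rpow_neg_one]
  have hxc : (x : ℂ) ≠ 0 := by exact_mod_cast hx'.ne'
  simp only [e]
  norm_num
  field_simp

lemma wk_int0 (α t : ℝ) (ha : -1 < α) (ht : 0 < t) : MeasureTheory.IntegrableOn
    (fun s => s ^ α * Real.exp (-(t * s))) (Set.Ioi 0) := by
  have := integrableOn_rpow_mul_exp_neg_mul_rpow ha one_pos ht
  simpa using this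

lemma wint0 (α t : ℝ) (ha : -1 < α) (ht : 0 < t) :
    ∫ s in Set.Ioi (0:ℝ), s ^ α * Real.exp (-(t * s)) = (1 / t) ^ (α + 1) * Real.Gamma (α + 1) := by
  have := Real.integral_rpow_mul_exp_neg_mul_Ioi (a := α + 1) (by linarith) ht
  simpa using this

lemma wI_half_bound (t : ℝ) (ht : 0 < t) :
    ‖wI (1/2) t‖ ≤ (1 / t) ^ (3/2 : ℝ) * Real.Gamma (3/2) := by
  have h := wint0 (1/2) t (by norm_num) ht
  rw [show (1/2 + 1 : ℝ) = 3/2 by norm_num] at h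
  rw [← h]
  apply MeasureTheory.norm_integral_le_of_norm_le (wk_int0 _ t (by norm_num) ht)
  filter_upwards [MeasureTheory.ae_restrict_mem measurableSet_Ioi] with s hs
  have hs' : (0:ℝ) < s := hs
  rw [wk_norm _ _ _ hs]
  gcongr
  apply mul_le_of_le_one_right (by positivity)
  rw [Real.exp_le_one_iff]; nlinarith

lemma wI_main_bound (t : ℝ) (ht : 0 < t) :
    ‖wI (-1/2) t - (π / ((1 + Complex.I) * t)) ^ (1/2 : ℂ)‖
      ≤ 1/2 * ((1 / t) ^ (5/2 : ℝ) * Real.Gamma (5/2)) := by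
  have h := wint0 (3/2) t (by norm_num) ht
  rw [show (3/2 + 1 : ℝ) = 5/2 by norm_num] at h
  have hre : 0 < ((1 + Complex.I) * t).re := by simpa using ht
  have hn : ∀ s : ℝ, ‖Complex.exp (-((1 + Complex.I) * t * s))‖ = Real.exp (-(t * s)) := by
    intro s; rw [Complex.norm_exp]; simp
  rw [← h, ← wgauss _ hre, wI, ← MeasureTheory.integral_sub (wk_int _ t (by norm_num)),
    ← MeasureTheory.integral_const_mul]
  · apply MeasureTheory.norm_integral_le_of_norm_le ((wk_int0 _ t (by norm_num) ht).const_mul _)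
    filter_upwards [MeasureTheory.ae_restrict_mem measurableSet_Ioi] with s hs
    have hs' : (0:ℝ) < s := hs
    rw [wk, ← sub_mul, norm_mul, hn, ← Complex.ofReal_sub, Complex.norm_real, ← mul_assoc]
    gcongr
    rw [← mul_sub_one, norm_mul, Real.norm_of_nonneg (by positivity)]
    have e : s ^ (3/2:ℝ) = s ^ (-1/2:ℝ) * s ^ 2 := by
      rw [← Real.rpow_natCast, ← Real.rpow_add hs']; norm_num
    rw [e, mul_left_comm]
    gcongr
    rw [Real.norm_eq_abs, abs_le]
    have := Real.add_one_le_exp (-(s ^ 2 / 2))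
    have h2 : Real.exp (-(s ^ 2 / 2)) ≤ 1 := by rw [Real.exp_le_one_iff]; nlinarith
    constructor <;> nlinarith
  · refine (wk_int0 (-1/2) t (by norm_num) ht).mono' (by fun_prop) ?_
    filter_upwards [MeasureTheory.ae_restrict_mem measurableSet_Ioi] with s hs
    have hs' : (0:ℝ) < s := hs
    rw [norm_mul, hn, Complex.norm_real, Real.norm_of_nonneg (by positivity)]

noncomputable def wK : ℝ := √(π / √2)

lemma w_lead (t : ℝ) (ht : 0 < t) :
    (√t : ℂ) * (π / ((1 + Complex.I) * t)) ^ (1/2 : ℂ) = wK * Complex.exp (-(Complex.I * (π / 8))) := by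
  have hsq : (0:ℝ) < √2 := by positivity
  have h2c : ((√2 : ℝ) : ℂ) ^ 2 = 2 := by
    rw [← Complex.ofReal_pow, Real.sq_sqrt (by norm_num)]; norm_num
  have hne : ((√2 : ℝ) : ℂ) ≠ 0 := by exact_mod_cast hsq.ne'
  have htc : (t : ℂ) ≠ 0 := by exact_mod_cast ht.ne'
  have h1I : (1 + Complex.I) ≠ 0 := by
    intro h; have := congrArg Complex.re h; simp at this
  have hexp : Complex.exp (-(Complex.I * (π / 4))) = √2 / (1 + Complex.I) := by
    have : Complex.exp (Complex.I * (π / 4)) = (1 + Complex.I) / √2 := by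
      rw [mul_comm, Complex.exp_mul_I]
      have h1 : Complex.cos (π / 4) = ((√2 / 2 : ℝ) : ℂ) := by
        rw [← Real.cos_pi_div_four]; push_cast; rfl
      have h2 : Complex.sin (π / 4) = ((√2 / 2 : ℝ) : ℂ) := by
        rw [← Real.sin_pi_div_four]; push_cast; rfl
      rw [h1, h2]
      push_cast
      field_simp
      linear_combination h2c
    rw [Complex.exp_neg, this, inv_div]
  have hbase : (π / ((1 + Complex.I) * t) : ℂ) =
      Complex.exp ((Real.log (π / (√2 * t)) : ℝ) - Complex.I * (π / 4)) := by
    rw [sub_eq_add_neg, Complex.exp_add, hexp, ← Complex.ofReal_exp,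
      Real.exp_log (by positivity)]
    push_cast
    field_simp
  have him : (((Real.log (π / (√2 * t)) : ℝ) : ℂ) - Complex.I * (π / 4)).im = -(π / 4) := by
    have : Complex.I * (π / 4 : ℂ) = ((π / 4 : ℝ) : ℂ) * Complex.I := by push_cast; ring
    rw [this, Complex.sub_im, Complex.im_ofReal_mul]; simp
  have hpi := Real.pi_pos
  rw [hbase, Complex.cpow_def_of_ne_zero (Complex.exp_ne_zero _),
    Complex.log_exp (by rw [him]; linarith) (by rw [him]; linarith), wK,
    Real.sqrt_eq_rpow t, Real.sqrt_eq_rpow (π / √2), Real.rpow_def_of_pos ht,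
    Real.rpow_def_of_pos (by positivity : 0 < π / √2), Complex.ofReal_exp, Complex.ofReal_exp,
    ← Complex.exp_add, ← Complex.exp_add]
  congr 1
  have : Real.log (π / (√2 * t)) = Real.log (π / √2) - Real.log t := by
    rw [← div_div, Real.log_div (by positivity) ht.ne']
  rw [this]
  push_cast; ring

noncomputable def wph (t : ℝ) : ℂ := Complex.exp (-(Complex.I * (t ^ 2 / 2 + π / 8)))

lemma wph_eq (t : ℝ) : wph t =
    (Real.cos (t ^ 2 / 2 + π / 8) : ℝ) - (Real.sin (t ^ 2 / 2 + π / 8) : ℝ) * Complex.I := by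
  rw [wph, ← mul_neg, mul_comm, Complex.exp_mul_I, Complex.cos_neg, Complex.sin_neg]
  push_cast; ring

lemma wE_norm (t : ℝ) : ‖wE t‖ = 1 := by
  have : -(Complex.I * (t:ℂ) ^ 2 / 2) = ((-(t ^ 2 / 2) : ℝ) : ℂ) * Complex.I := by
    push_cast; ring
  rw [wE, this, Complex.norm_exp_ofReal_mul_I]

lemma w_inv_tendsto (C : ℝ) : Tendsto (fun t : ℝ => C * (1 / t) ^ 2) atTop (nhds 0) := by
  have : Tendsto (fun t : ℝ => (1 / t)) atTop (nhds 0) := by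
    simpa using tendsto_inv_atTop_zero (𝕜 := ℝ)
  simpa using (this.pow 2).const_mul C

lemma w_sqrt_mul (t : ℝ) (ht : 0 < t) : √t * (1 / t) ^ (5/2 : ℝ) = (1 / t) ^ 2 := by
  rw [Real.sqrt_eq_rpow, one_div t, Real.inv_rpow ht.le, ← Real.rpow_neg ht.le,
    ← Real.rpow_add ht, inv_pow, ← Real.rpow_natCast, ← Real.rpow_neg ht.le]
  norm_num

lemma w_div_sqrt (t : ℝ) (ht : 0 < t) : (1 / t) ^ (3/2 : ℝ) / √t = (1 / t) ^ 2 := by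
  rw [Real.sqrt_eq_rpow, one_div t, Real.inv_rpow ht.le, ← Real.rpow_neg ht.le,
    ← Real.rpow_sub ht, inv_pow, ← Real.rpow_natCast, ← Real.rpow_neg ht.le]
  norm_num

lemma wA : Tendsto (fun t : ℝ => (√t : ℂ) * wF t - wK * wph t) atTop (nhds 0) := by
  apply squeeze_zero_norm' _ (w_inv_tendsto (1/2 * Real.Gamma (5/2)))
  filter_upwards [eventually_gt_atTop 0] with t ht
  have e : (√t : ℂ) * wF t - wK * wph t =
      wE t * (√t * (wI (-1/2) t - (π / ((1 + Complex.I) * t)) ^ (1/2 : ℂ))) := by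
    have : wph t = wE t * Complex.exp (-(Complex.I * (π / 8))) := by
      rw [wph, wE, ← Complex.exp_add]; congr 1; ring
    rw [mul_sub, w_lead t ht, this, wF]; ring
  rw [e, norm_mul, wE_norm, one_mul, norm_mul, Complex.norm_real,
    Real.norm_of_nonneg (by positivity)]
  calc _ ≤ √t * (1/2 * ((1 / t) ^ (5/2 : ℝ) * Real.Gamma (5/2))) := by
        gcongr; exact wI_main_bound t ht
    _ = _ := by rw [← w_sqrt_mul t ht]; ring

lemma wB : Tendsto (fun t : ℝ => wG t / (√t : ℂ) + Complex.I * (wK * wph t)) atTop (nhds 0) := by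
  have h2 : Tendsto (fun t : ℝ => (1 + Complex.I) * (wE t * wI (1/2) t / (√t : ℂ)))
      atTop (nhds 0) := by
    apply squeeze_zero_norm' _ (w_inv_tendsto (‖1 + Complex.I‖ * Real.Gamma (3/2)))
    filter_upwards [eventually_gt_atTop 0] with t ht
    rw [norm_mul, norm_div, norm_mul, wE_norm, one_mul, Complex.norm_real,
      Real.norm_of_nonneg (by positivity), mul_assoc]
    gcongr
    calc _ ≤ (1 / t) ^ (3/2 : ℝ) * Real.Gamma (3/2) / √t := by
          gcongr; exact wI_half_bound t ht
      _ = _ := by rw [← w_div_sqrt t ht]; ring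
  have := (wA.const_mul (-Complex.I)).sub h2
  rw [mul_zero, sub_zero] at this
  refine this.congr' ?_
  filter_upwards [eventually_gt_atTop 0] with t ht
  have hs : ((√t : ℝ) : ℂ) ≠ 0 := by exact_mod_cast (Real.sqrt_pos.mpr ht).ne'
  have hs2 : ((√t : ℝ) : ℂ) ^ 2 = t := by
    rw [← Complex.ofReal_pow, Real.sq_sqrt ht.le]
  rw [wF, wG, ← hs2]
  field_simp
  ring

noncomputable def wa : ℝ := ∫ s in Set.Ioi (0:ℝ), s ^ (-1/2 : ℝ) * Real.exp (-(s ^ 2 / 2))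
noncomputable def wb : ℝ := ∫ s in Set.Ioi (0:ℝ), s ^ (1/2 : ℝ) * Real.exp (-(s ^ 2 / 2))

lemma wint_sq (q : ℝ) (hq : -1 < q) :
    ∫ s in Set.Ioi (0:ℝ), s ^ q * Real.exp (-(s ^ 2 / 2)) =
      (1/2) ^ (-(q + 1) / 2) * (1 / 2) * Real.Gamma ((q + 1) / 2) := by
  rw [← integral_rpow_mul_exp_neg_mul_rpow two_pos hq (by norm_num : (0:ℝ) < 1/2)]
  refine MeasureTheory.setIntegral_congr_fun measurableSet_Ioi fun x hx => ?_
  simp only [Real.rpow_two]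
  congr 2; ring

lemma wa_pos : 0 < wa := by
  rw [wa, wint_sq _ (by norm_num)]
  have : 0 < Real.Gamma ((-1/2 + 1) / 2) := Real.Gamma_pos_of_pos (by norm_num)
  positivity

lemma wb_pos : 0 < wb := by
  rw [wb, wint_sq _ (by norm_num)]
  have : 0 < Real.Gamma ((1/2 + 1) / 2) := Real.Gamma_pos_of_pos (by norm_num)
  positivity

lemma wab : wa * wb = π / √2 := by
  rw [wa, wb, wint_sq _ (by norm_num), wint_sq _ (by norm_num)]
  have h := Real.Gamma_mul_Gamma_one_sub (1/4)
  rw [show π * (1/4) = π / 4 by ring, Real.sin_pi_div_four] at h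
  have e : ((1/2:ℝ) ^ (-1/4 : ℝ)) * ((1/2:ℝ) ^ (-3/4 : ℝ)) = 2 := by
    rw [← Real.rpow_add (by norm_num)]; norm_num [Real.rpow_neg_one]
  have h2 : √2 * √2 = 2 := Real.mul_self_sqrt (by norm_num)
  have hs : 0 < √2 := by positivity
  have h' : Real.Gamma (1/4) * Real.Gamma (3/4) = 2 * (π / √2) := by
    rw [show (3/4 : ℝ) = 1 - 1/4 by norm_num, h]; field_simp
  rw [show (-(-1/2 + 1) / 2 : ℝ) = -1/4 by norm_num, show ((-1/2 + 1) / 2 : ℝ) = 1/4 by norm_num,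
    show (-(1/2 + 1) / 2 : ℝ) = -3/4 by norm_num, show ((1/2 + 1) / 2 : ℝ) = 3/4 by norm_num]
  linear_combination (Real.Gamma (1/4) * Real.Gamma (3/4) / 4) * e + 1/2 * h'

lemma wI_zero (α : ℝ) : wI α 0 = ((∫ s in Set.Ioi (0:ℝ), s ^ α * Real.exp (-(s ^ 2 / 2)) : ℝ) : ℂ) := by
  rw [wI, ← integral_complex_ofReal]
  refine MeasureTheory.setIntegral_congr_fun measurableSet_Ioi fun x hx => ?_
  simp [wk]

lemma wF_zero : wF 0 = wa := by simp [wF, wE, wI_zero, wa]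
lemma wG_zero : wG 0 = -(1 + Complex.I) * wb := by simp [wG, wE, wI_zero, wb]; ring

lemma wK_sq : wK * wK = wa * wb := by
  rw [wab, wK, Real.mul_self_sqrt (by positivity)]

def WSol (x v : ℝ → ℝ) : Prop :=
  (∀ t, HasDerivAt x (v t) t) ∧ (∀ t, HasDerivAt v (-(t ^ 2 * x t)) t)

lemma WSol.wronskian {x v y w : ℝ → ℝ} (h : WSol x v) (k : WSol y w) (t : ℝ) :
    x t * w t - v t * y t = x 0 * w 0 - v 0 * y 0 := by
  have hd : ∀ t, HasDerivAt (fun t => x t * w t - v t * y t) 0 t := fun t =>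
    (((h.1 t).mul (k.2 t)).sub ((h.2 t).mul (k.1 t))).congr_deriv (by ring)
  exact is_const_of_deriv_eq_zero (fun t => (hd t).differentiableAt) (fun t => (hd t).deriv) t 0

lemma WSol.reflect {x v : ℝ → ℝ} (h : WSol x v) : WSol (fun t => x (-t)) (fun t => - v (-t)) := by
  refine ⟨fun t => ?_, fun t => ?_⟩
  · exact ((h.1 (-t)).scomp t (hasDerivAt_neg t)).congr_deriv (by simp)
  · exact ((h.2 (-t)).scomp t (hasDerivAt_neg t)).neg.congr_deriv (by simp)

lemma wsol_re : WSol (fun t => (wF t).re) (fun t => (wG t).re) := by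
  refine ⟨fun t => ?_, fun t => ?_⟩
  · exact (Complex.reCLM.hasFDerivAt.comp_hasDerivAt t (wF_deriv t))
  · refine (Complex.reCLM.hasFDerivAt.comp_hasDerivAt t (wG_deriv t)).congr_deriv ?_
    simp [← Complex.ofReal_pow]

lemma wsol_im : WSol (fun t => (wF t).im) (fun t => (wG t).im) := by
  refine ⟨fun t => ?_, fun t => ?_⟩
  · exact (Complex.imCLM.hasFDerivAt.comp_hasDerivAt t (wF_deriv t))
  · refine (Complex.imCLM.hasFDerivAt.comp_hasDerivAt t (wG_deriv t)).congr_deriv ?_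
    simp [← Complex.ofReal_pow]

lemma WSol.lin {x v y w : ℝ → ℝ} (h : WSol x v) (k : WSol y w) (a b : ℝ) :
    WSol (fun t => a * x t + b * y t) (fun t => a * v t + b * w t) :=
  ⟨fun t => ((h.1 t).const_mul a).add ((k.1 t).const_mul b),
   fun t => (((h.2 t).const_mul a).add ((k.2 t).const_mul b)).congr_deriv (by ring)⟩

noncomputable def wxp (t : ℝ) : ℝ := 1 / wa * (wF t).re + (-1 / wa) * (wF t).im
noncomputable def wvp (t : ℝ) : ℝ := 1 / wa * (wG t).re + (-1 / wa) * (wG t).im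
noncomputable def wxm (t : ℝ) : ℝ := 0 * (wF t).re + (-1 / wb) * (wF t).im
noncomputable def wvm (t : ℝ) : ℝ := 0 * (wG t).re + (-1 / wb) * (wG t).im

lemma wsp : WSol wxp wvp := wsol_re.lin wsol_im _ _
lemma wsm : WSol wxm wvm := wsol_re.lin wsol_im _ _

lemma wxp0 : wxp 0 = 1 := by have := wa_pos.ne'; simp [wxp, wF_zero, this]
lemma wvp0 : wvp 0 = 0 := by simp [wvp, wG_zero]; ring
lemma wxm0 : wxm 0 = 0 := by simp [wxm, wF_zero]
lemma wvm0 : wvm 0 = 1 := by have := wb_pos.ne'; simp [wvm, wG_zero]; field_simp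

lemma wwron (t : ℝ) : wxp t * wvm t - wvp t * wxm t = 1 := by
  rw [wsp.wronskian wsm, wxp0, wvm0, wvp0, wxm0]; norm_num

lemma WSol.unique {y v : ℝ → ℝ} (h : WSol y v) (h0 : y 0 = 0) (h1 : v 0 = 0) (t : ℝ) : y t = 0 := by
  have e1 := h.wronskian wsp t
  have e2 := h.wronskian wsm t
  rw [h0, h1] at e1 e2
  have := wwron t
  linear_combination -(y t) * this - wxm t * e1 + wxp t * e2

lemma wxp_even (t : ℝ) : wxp (-t) = wxp t := by
  have := (wsp.lin wsp.reflect 1 (-1)).unique (by simp) (by simp [wvp0]) t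
  linarith

lemma wxm_odd (t : ℝ) : wxm (-t) = - wxm t := by
  have := (wsm.lin wsm.reflect 1 1).unique (by simp [wxm0]) (by simp) t
  linarith

lemma w_trig (t : ℝ) :
    Real.cos (t ^ 2 / 2 - 3 * π / 8) = Real.sin (t ^ 2 / 2 + π / 8) ∧
    Real.sin (t ^ 2 / 2 - 3 * π / 8) = - Real.cos (t ^ 2 / 2 + π / 8) ∧
    √2 * Real.cos (t ^ 2 / 2 - π / 8) =
      Real.cos (t ^ 2 / 2 + π / 8) + Real.sin (t ^ 2 / 2 + π / 8) ∧
    √2 * Real.sin (t ^ 2 / 2 - π / 8) =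
      Real.sin (t ^ 2 / 2 + π / 8) - Real.cos (t ^ 2 / 2 + π / 8) := by
  have h2 : √2 * √2 = 2 := Real.mul_self_sqrt (by norm_num)
  have e1 : t ^ 2 / 2 - 3 * π / 8 = (t ^ 2 / 2 + π / 8) - π / 2 := by ring
  have e2 : t ^ 2 / 2 - π / 8 = (t ^ 2 / 2 + π / 8) - π / 4 := by ring
  rw [e1, e2, Real.cos_sub_pi_div_two, Real.sin_sub_pi_div_two, Real.cos_sub, Real.sin_sub,
    Real.cos_pi_div_four, Real.sin_pi_div_four]
  refine ⟨rfl, rfl, ?_, ?_⟩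
  · linear_combination (Real.cos (t ^ 2 / 2 + π / 8) + Real.sin (t ^ 2 / 2 + π / 8)) / 2 * h2
  · linear_combination (Real.sin (t ^ 2 / 2 + π / 8) - Real.cos (t ^ 2 / 2 + π / 8)) / 2 * h2

lemma wA_re : Tendsto (fun t : ℝ => √t * (wF t).re - wK * Real.cos (t ^ 2 / 2 + π / 8))
    atTop (nhds 0) := by
  refine ((Complex.continuous_re.tendsto 0).comp wA).congr fun t => ?_
  simp [wph_eq, -Complex.ofReal_cos, -Complex.ofReal_sin]

lemma wA_im : Tendsto (fun t : ℝ => √t * (wF t).im + wK * Real.sin (t ^ 2 / 2 + π / 8))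
    atTop (nhds 0) := by
  refine ((Complex.continuous_im.tendsto 0).comp wA).congr fun t => ?_
  simp [wph_eq, -Complex.ofReal_cos, -Complex.ofReal_sin]

lemma wB_re : Tendsto (fun t : ℝ => (wG t).re / √t + wK * Real.sin (t ^ 2 / 2 + π / 8))
    atTop (nhds 0) := by
  refine ((Complex.continuous_re.tendsto 0).comp wB).congr fun t => ?_
  simp [wph_eq, -Complex.ofReal_cos, -Complex.ofReal_sin]

lemma wB_im : Tendsto (fun t : ℝ => (wG t).im / √t + wK * Real.cos (t ^ 2 / 2 + π / 8))
    atTop (nhds 0) := by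
  refine ((Complex.continuous_im.tendsto 0).comp wB).congr fun t => ?_
  simp [wph_eq, -Complex.ofReal_cos, -Complex.ofReal_sin]

/-- Existence of Wronskian-normalized even/odd solutions of the Weber
equation `ẍ + t²x = 0` with the stated oscillatory asymptotics and amplitude product
`c₊·c₋ = √2`. -/
theorem weber_solutions_asymptotics :
    ∃ (xp vp xm vm : ℝ → ℝ) (cp cm : ℝ),
      (∀ t, HasDerivAt xp (vp t) t) ∧ (∀ t, HasDerivAt vp (-(t ^ 2 * xp t)) t) ∧
      (∀ t, HasDerivAt xm (vm t) t) ∧ (∀ t, HasDerivAt vm (-(t ^ 2 * xm t)) t) ∧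
      (∀ t, xp (-t) = xp t) ∧ (∀ t, xm (-t) = -xm t) ∧
      (∀ t, xp t * vm t - vp t * xm t = 1) ∧
      0 < cp ∧ 0 < cm ∧ cp * cm = Real.sqrt 2 ∧
      Tendsto (fun t : ℝ => Real.sqrt t * xp t - cp * Real.cos (t ^ 2 / 2 - π / 8))
        atTop (nhds 0) ∧
      Tendsto (fun t : ℝ => Real.sqrt t * xm t - cm * Real.cos (t ^ 2 / 2 - 3 * π / 8))
        atTop (nhds 0) ∧
      Tendsto (fun t : ℝ => vp t / Real.sqrt t + cp * Real.sin (t ^ 2 / 2 - π / 8))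
        atTop (nhds 0) ∧
      Tendsto (fun t : ℝ => vm t / Real.sqrt t + cm * Real.sin (t ^ 2 / 2 - 3 * π / 8))
        atTop (nhds 0) := by
  have ha := wa_pos
  have hb := wb_pos
  have hK : 0 < wK := Real.sqrt_pos.mpr (by positivity)
  refine ⟨wxp, wvp, wxm, wvm, √2 * wK / wa, wK / wb, wsp.1, wsp.2, wsm.1, wsm.2, wxp_even,
    wxm_odd, wwron, by positivity, by positivity, ?_, ?_, ?_, ?_, ?_⟩
  · have := wK_sq
    field_simp
    linear_combination this
  · have := (wA_re.sub wA_im).const_mul (1 / wa)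
    rw [sub_zero, mul_zero] at this
    refine this.congr fun t => ?_
    obtain ⟨-, -, h, -⟩ := w_trig t
    rw [wxp]
    linear_combination (wK / wa) * h
  · have := wA_im.const_mul (-1 / wb)
    rw [mul_zero] at this
    refine this.congr fun t => ?_
    obtain ⟨h, -, -, -⟩ := w_trig t
    rw [wxm, h]
    ring
  · have := (wB_re.sub wB_im).const_mul (1 / wa)
    rw [sub_zero, mul_zero] at this
    refine this.congr fun t => ?_
    obtain ⟨-, -, -, h⟩ := w_trig t
    rw [wvp]
    linear_combination (-wK / wa) * h
  · have := wB_im.const_mul (-1 / wb)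
    rw [mul_zero] at this
    refine this.congr fun t => ?_
    obtain ⟨-, h, -, -⟩ := w_trig t
    rw [wvm, h]
    ring
end

section
/- Let δ ∈ ℝ. There exist twice differentiable functions x₊, x₋ : ℝ → ℝ solving ẍ(t) + (t² + δ²)x(t) = 0 for all t, with x₊ even, x₋ odd, and Wronskian x₊ẋ₋ − ẋ₊x₋ = 1, together with nonzero real constants x̂₊, x̂₋, such that with γ₊ = 1/Γ((1+iδ²)/4), γ₋ = 1/Γ((3+iδ²)/4), θ₊(t) = t²/2 + (δ²/2)·log t − π/8, and θ₋(t) = t²/2 + (δ²/2)·log t − 3π/8, one has as t → +∞: √t·x_±(t) − x̂_±·(γ_±·e^{iθ_±(t)} + conj(γ_±·e^{iθ_±(t)})) → 0 and ẋ_±(t)/√t − x̂_±·(i·γ_±·e^{iθ_±(t)} + conj(i·γ_±·e^{iθ_±(t)})) → 0. -/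
open Real Filter

namespace GW

open MeasureTheory Set

/-- Integrand of the rotated Laplace integral. -/
noncomputable def F (c d : ℂ) (T s : ℝ) : ℂ :=
  ((Real.exp (-(T * s)) : ℝ) : ℂ) * (s : ℂ) ^ (c - 1) * (1 + Complex.I * s) ^ (d - 1)

/-- Rotated Laplace integral (Tricomi function on a ray). -/
noncomputable def K (c d : ℂ) (T : ℝ) : ℂ := ∫ s in Ioi (0 : ℝ), F c d T s

lemma slit (a s : ℝ) (ha : 0 < a) : (a : ℂ) + Complex.I * s ∈ Complex.slitPlane := by
  left; simp [ha]

lemma slit1 (s : ℝ) : (1 : ℂ) + Complex.I * s ∈ Complex.slitPlane := by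
  have := slit 1 s one_pos
  simpa using this

lemma norm_cpow_le (z e : ℂ) (hz : z ≠ 0) :
    ‖z ^ e‖ ≤ ‖z‖ ^ e.re * Real.exp (π * |e.im|) := by
  rw [Complex.norm_cpow_of_ne_zero hz, div_eq_mul_inv, ← Real.exp_neg]
  gcongr
  calc -(z.arg * e.im) ≤ |z.arg * e.im| := neg_le_abs _
    _ = |z.arg| * |e.im| := abs_mul _ _
    _ ≤ π * |e.im| := by gcongr; exact Complex.abs_arg_le_pi z

lemma norm_one_add (s : ℝ) : 1 ≤ ‖(1 : ℂ) + Complex.I * s‖ := by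
  have := Complex.abs_re_le_norm ((1 : ℂ) + Complex.I * s)
  simpa using this

lemma bound1 (d : ℂ) (hd : d.re ≤ 1) (s : ℝ) :
    ‖((1 : ℂ) + Complex.I * s) ^ (d - 1)‖ ≤ Real.exp (π * |d.im|) := by
  have h := norm_cpow_le ((1 : ℂ) + Complex.I * s) (d - 1) (Complex.slitPlane_ne_zero (slit1 s))
  refine h.trans ?_
  have h2 : ‖(1 : ℂ) + Complex.I * s‖ ^ (d - 1).re ≤ 1 :=
    Real.rpow_le_one_of_one_le_of_nonpos (norm_one_add s) (by simpa using hd)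
  have h3 : (d - 1).im = d.im := by simp
  rw [h3]
  nlinarith [Real.exp_pos (π * |d.im|)]

lemma cont_pow (d : ℂ) : Continuous fun s : ℝ => ((1 : ℂ) + Complex.I * s) ^ d := by
  refine Continuous.cpow (by fun_prop) continuous_const fun s => slit1 s

lemma meas_F (c d : ℂ) (T : ℝ) : AEStronglyMeasurable (F c d T) (volume.restrict (Ioi 0)) := by
  refine ContinuousOn.aestronglyMeasurable ?_ measurableSet_Ioi
  unfold F
  refine ContinuousOn.mul (ContinuousOn.mul (by fun_prop) ?_) (cont_pow _).continuousOn
  intro s hs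
  refine ContinuousAt.continuousWithinAt ?_
  exact (Complex.continuousAt_ofReal_cpow_const s (c - 1) (Or.inr (ne_of_gt hs)))

lemma int_real (r T : ℝ) (hr : 0 < r) (hT : 0 < T) :
    IntegrableOn (fun s : ℝ => Real.exp (-(T * s)) * s ^ (r - 1)) (Ioi 0) := by
  have := integrableOn_rpow_mul_exp_neg_mul_rpow (p := 1) (s := r - 1) (b := T) (by linarith)
    one_pos hT
  refine this.congr_fun (fun s hs => ?_) measurableSet_Ioi
  simp [mul_comm]

lemma norm_F (c d : ℂ) (hd : d.re ≤ 1) (T s : ℝ) (hs : 0 < s) :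
    ‖F c d T s‖ ≤ Real.exp (-(T * s)) * s ^ (c.re - 1) * Real.exp (π * |d.im|) := by
  unfold F
  rw [norm_mul, norm_mul, Complex.norm_cpow_eq_rpow_re_of_pos hs, Complex.norm_real,
    Real.norm_of_nonneg (Real.exp_pos _).le]
  have := bound1 d hd s
  simp only [Complex.sub_re, Complex.one_re]
  gcongr

lemma int_F (c d : ℂ) (hc : 0 < c.re) (hd : d.re ≤ 1) (T : ℝ) (hT : 0 < T) :
    IntegrableOn (F c d T) (Ioi 0) := by
  refine Integrable.mono' ((int_real c.re T hc hT).mul_const (Real.exp (π * |d.im|)))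
    (meas_F c d T) ?_
  filter_upwards [ae_restrict_mem measurableSet_Ioi] with s hs
  exact norm_F c d hd T s hs

lemma F_shift (c d : ℂ) (T s : ℝ) (hs : 0 < s) : F (c + 1) d T s = s * F c d T s := by
  unfold F
  have : (s : ℂ) ≠ 0 := by exact_mod_cast hs.ne'
  rw [show c + 1 - 1 = (c - 1) + 1 by ring, Complex.cpow_add _ _ this, Complex.cpow_one]
  ring

lemma hasDeriv_K (c d : ℂ) (hc : 0 < c.re) (hd : d.re ≤ 1) (T : ℝ) (hT : 0 < T) :
    HasDerivAt (K c d) (-K (c + 1) d T) T := by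
  have key := hasDerivAt_integral_of_dominated_loc_of_deriv_le (μ := volume.restrict (Ioi 0))
    (F := F c d) (F' := fun T s => -F (c + 1) d T s) (x₀ := T) (s := Ioi (T / 2))
    (bound := fun s => Real.exp (-(T / 2 * s)) * s ^ ((c + 1).re - 1) * Real.exp (π * |d.im|))
    (Ioi_mem_nhds (by linarith)) (Eventually.of_forall fun x => meas_F c d x)
    (int_F c d hc hd T hT) (meas_F (c + 1) d T).neg ?_ ?_ ?_
  · have := key.2
    rw [integral_neg] at this
    exact this
  · filter_upwards [ae_restrict_mem measurableSet_Ioi] with s hs x hx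
    rw [norm_neg]
    refine (norm_F (c + 1) d hd x s hs).trans ?_
    have hs : 0 < s := hs
    have hx : T / 2 < x := hx
    gcongr
  · exact (int_real (c + 1).re (T / 2) (by simp; linarith) (by linarith)).mul_const _
  · filter_upwards [ae_restrict_mem measurableSet_Ioi] with s hs x hx
    rw [F_shift c d x s hs]
    have h1 : HasDerivAt (fun x : ℝ => Real.exp (-(x * s))) (Real.exp (-(x * s)) * (-(1 * s))) x :=
      (((hasDerivAt_id x).mul_const s).neg).exp
    have h2 := (h1.ofReal_comp.mul_const ((s : ℂ) ^ (c - 1))).mul_const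
      ((1 + Complex.I * s) ^ (d - 1))
    unfold F
    refine h2.congr_deriv ?_
    push_cast
    ring

lemma K_rel (c d : ℂ) (hc : 0 < c.re) (hd : d.re ≤ 1) (T : ℝ) (hT : 0 < T) :
    -T * (K (c + 1) d T + Complex.I * K (c + 1 + 1) d T) + c * K c d T
      + Complex.I * (c + d) * K (c + 1) d T = 0 := by
  have i0 := int_F c d hc hd T hT
  have i1 := int_F (c + 1) d (by simp; linarith) hd T hT
  have i2 := int_F (c + 1 + 1) d (by simp; linarith) hd T hT
  have hc0 : c ≠ 0 := by rintro rfl; simp at hc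
  let G : ℝ → ℂ := fun s => ((Real.exp (-(T * s)) : ℝ) : ℂ) * (s : ℂ) ^ c * (1 + Complex.I * s) ^ d
  let G' : ℝ → ℂ := fun s => (-T : ℂ) * (F (c + 1) d T s + Complex.I * F (c + 1 + 1) d T s)
    + c * F c d T s + Complex.I * (c + d) * F (c + 1) d T s
  have hG' : ∫ s in Ioi 0, G' s = 0 - G 0 := by
    refine integral_Ioi_of_hasDerivAt_of_tendsto ?_ ?_ ?_ ?_
    · refine Continuous.continuousWithinAt ?_
      refine Continuous.mul (Continuous.mul (by fun_prop) ?_) (cont_pow _)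
      exact Complex.continuous_ofReal_cpow_const hc
    · intro s hs
      have hs : 0 < s := hs
      have hs' : (s : ℂ) ≠ 0 := by exact_mod_cast hs.ne'
      have h1 : HasDerivAt (fun s : ℝ => Real.exp (-(T * s))) (Real.exp (-(T * s)) * (-(T * 1))) s :=
        (((hasDerivAt_id s).const_mul T).neg).exp
      have h2 := hasDerivAt_ofReal_cpow_const hs.ne' hc0
      have h3 : HasDerivAt (fun s : ℂ => ((1 : ℂ) + Complex.I * s) ^ d)
          (d * (1 + Complex.I * s) ^ (d - 1) * (Complex.I * 1)) (s : ℂ) :=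
        HasDerivAt.cpow_const (((hasDerivAt_id (s : ℂ)).const_mul Complex.I).const_add 1) (slit1 s)
      have h4 := (h1.ofReal_comp.mul h2).mul h3.comp_ofReal
      have e1 : (s : ℂ) ^ c = s * s ^ (c - 1) := by
        rw [Complex.cpow_sub _ _ hs', Complex.cpow_one]; field_simp
      have e2 : (1 + Complex.I * (s : ℂ)) ^ d = (1 + Complex.I * s) * (1 + Complex.I * s) ^ (d - 1) := by
        have := Complex.slitPlane_ne_zero (slit1 s)
        rw [Complex.cpow_sub _ _ this, Complex.cpow_one]; field_simp
      refine h4.congr_deriv ?_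
      simp only [G', Pi.mul_apply]
      rw [F_shift (c + 1) d T s hs, F_shift c d T s hs, e1, e2]
      unfold F
      push_cast
      ring
    · exact (((i1.add (i2.const_mul _)).const_mul _).add (i0.const_mul _)).add (i1.const_mul _)
    · have hb : ∀ᶠ s : ℝ in atTop, ‖G s‖ ≤ (s ^ (c.re + |d.re|) * Real.exp (-T * s)) *
          (2 ^ |d.re| * Real.exp (π * |d.im|)) := by
        filter_upwards [eventually_ge_atTop 1] with s hs
        have hs0 : 0 < s := by linarith
        simp only [G]
        rw [norm_mul, norm_mul, Complex.norm_cpow_eq_rpow_re_of_pos hs0, Complex.norm_real,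
          Real.norm_of_nonneg (Real.exp_pos _).le]
        have h1 := norm_cpow_le ((1 : ℂ) + Complex.I * s) d (Complex.slitPlane_ne_zero (slit1 s))
        have h2 : ‖(1 : ℂ) + Complex.I * s‖ ≤ 2 * s := by
          refine (norm_add_le _ _).trans ?_
          simp [abs_of_pos hs0]; linarith
        have h3 : ‖(1 : ℂ) + Complex.I * s‖ ^ d.re ≤ (2 * s) ^ |d.re| :=
          (Real.rpow_le_rpow_of_exponent_le (norm_one_add s) (le_abs_self _)).trans
            (Real.rpow_le_rpow (norm_nonneg _) h2 (abs_nonneg _))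
        rw [Real.mul_rpow (by norm_num) hs0.le] at h3
        rw [Real.rpow_add hs0]
        calc _ ≤ Real.exp (-(T * s)) * s ^ c.re * ((2 ^ |d.re| * s ^ |d.re|) * Real.exp (π * |d.im|)) := by
              gcongr
              exact h1.trans (by gcongr)
          _ = _ := by rw [neg_mul]; ring
      refine squeeze_zero_norm' hb ?_
      have := (tendsto_rpow_mul_exp_neg_mul_atTop_nhds_zero (c.re + |d.re|) T hT).mul_const
        (2 ^ |d.re| * Real.exp (π * |d.im|))
      simpa using this
  have hG0 : G 0 = 0 := by simp [G, hc0]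
  rw [hG0, sub_zero] at hG'
  simp only [G'] at hG'
  rw [integral_add, integral_add, integral_const_mul, integral_add, integral_const_mul,
    integral_const_mul, integral_const_mul] at hG'
  · exact hG'
  · exact i1
  · exact i2.const_mul _
  · exact (i1.add (i2.const_mul _)).const_mul _
  · exact i0.const_mul _
  · exact ((i1.add (i2.const_mul _)).const_mul _).add (i0.const_mul _)
  · exact i1.const_mul _

lemma subst1 (c d : ℂ) (T : ℝ) (hT : 0 < T) :
    (T : ℂ) ^ c * K c d T = ∫ u in Ioi (0 : ℝ), ((Real.exp (-u) : ℝ) : ℂ) * (u : ℂ) ^ (c - 1) *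
      (1 + Complex.I * ((u / T : ℝ) : ℂ)) ^ (d - 1) := by
  have hT' : (T : ℂ) ≠ 0 := by exact_mod_cast hT.ne'
  have h := integral_comp_mul_left_Ioi (F c d T) 0 (inv_pos.2 hT)
  rw [mul_zero, inv_inv] at h
  have h2 : K c d T = (T : ℂ)⁻¹ * ∫ u in Ioi (0 : ℝ), F c d T (T⁻¹ * u) := by
    rw [h, Complex.real_smul, inv_mul_cancel_left₀ hT', K]
  rw [h2, ← integral_const_mul, ← integral_const_mul]
  refine setIntegral_congr_fun measurableSet_Ioi fun u hu => ?_
  have hu : 0 < u := hu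
  simp only [F]
  have e1 : T * (T⁻¹ * u) = u := by field_simp
  have e2 : (u : ℂ) ^ (c - 1) = (T : ℂ) ^ (c - 1) * ((T⁻¹ * u : ℝ) : ℂ) ^ (c - 1) := by
    rw [← Complex.mul_cpow_ofReal_nonneg hT.le (by positivity), ← Complex.ofReal_mul, e1]
  have e3 : (T : ℂ) ^ c = T * (T : ℂ) ^ (c - 1) := by
    rw [Complex.cpow_sub _ _ hT', Complex.cpow_one]; field_simp
  rw [e1, e2, e3, show T⁻¹ * u = u / T by field_simp]
  field_simp

lemma scale_pow (e : ℂ) (T : ℝ) (hT : 0 < T) (z : ℂ) (hz : z ≠ 0) :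
    (T : ℂ) ^ e * z ^ e = (T * z) ^ e := by
  have hT' : (T : ℂ) ≠ 0 := by exact_mod_cast hT.ne'
  rw [Complex.cpow_def_of_ne_zero hT', Complex.cpow_def_of_ne_zero hz,
    Complex.cpow_def_of_ne_zero (mul_ne_zero hT' hz), Complex.log_ofReal_mul hT hz,
    ← Complex.exp_add, Complex.ofReal_log hT.le]
  congr 1; ring

lemma subst2 (c d : ℂ) (T : ℝ) (hT : 0 < T) :
    (T : ℂ) ^ (c + d - 1) * K c d T = ∫ u in Ioi (0 : ℝ), ((Real.exp (-u) : ℝ) : ℂ) *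
      (u : ℂ) ^ (c - 1) * (T + Complex.I * u) ^ (d - 1) := by
  have hT' : (T : ℂ) ≠ 0 := by exact_mod_cast hT.ne'
  rw [show c + d - 1 = (d - 1) + c by ring, Complex.cpow_add _ _ hT', mul_assoc, subst1 c d T hT,
    ← integral_const_mul]
  refine setIntegral_congr_fun measurableSet_Ioi fun u hu => ?_
  have e : (T : ℂ) + Complex.I * u = T * (1 + Complex.I * ((u / T : ℝ) : ℂ)) := by
    push_cast; field_simp
  rw [e, ← scale_pow _ T hT _ (Complex.slitPlane_ne_zero (slit1 _))]
  ring

lemma K_large (c d : ℂ) (hc : 0 < c.re) (hd : d.re ≤ 1) :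
    Tendsto (fun T : ℝ => (T : ℂ) ^ c * K c d T) atTop (nhds (Complex.Gamma c)) := by
  have hlim : Complex.Gamma c = ∫ u in Ioi (0 : ℝ), ((Real.exp (-u) : ℝ) : ℂ) * (u : ℂ) ^ (c - 1) *
      1 := by
    rw [Complex.Gamma_eq_integral hc, Complex.GammaIntegral]; simp
  rw [hlim]
  have key : Tendsto (fun T : ℝ => ∫ u in Ioi (0 : ℝ), ((Real.exp (-u) : ℝ) : ℂ) *
      (u : ℂ) ^ (c - 1) * (1 + Complex.I * ((u / T : ℝ) : ℂ)) ^ (d - 1)) atTop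
      (nhds (∫ u in Ioi (0 : ℝ), ((Real.exp (-u) : ℝ) : ℂ) * (u : ℂ) ^ (c - 1) * 1)) := by
    refine tendsto_integral_filter_of_dominated_convergence
      (fun u => Real.exp (-(1 * u)) * u ^ (c.re - 1) * Real.exp (π * |d.im|)) ?_ ?_ ?_ ?_
    · refine Eventually.of_forall fun T => ?_
      refine ContinuousOn.aestronglyMeasurable ?_ measurableSet_Ioi
      refine ContinuousOn.mul (ContinuousOn.mul (by fun_prop) ?_) ?_
      · intro s hs
        refine ContinuousAt.continuousWithinAt ?_
        exact (Complex.continuousAt_ofReal_cpow_const s (c - 1) (Or.inr (ne_of_gt hs)))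
      · exact ((cont_pow (d - 1)).comp (continuous_id.div_const T)).continuousOn
    · refine Eventually.of_forall fun T => ?_
      filter_upwards [ae_restrict_mem measurableSet_Ioi] with u hu
      rw [norm_mul, norm_mul, Complex.norm_cpow_eq_rpow_re_of_pos hu, Complex.norm_real,
        Real.norm_of_nonneg (Real.exp_pos _).le]
      have := bound1 d hd (u / T)
      have hu : 0 < u := hu
      simp only [Complex.sub_re, Complex.one_re, one_mul]
      gcongr
    · exact (int_real c.re 1 hc one_pos).mul_const _
    · filter_upwards with u
      refine Tendsto.const_mul _ ?_
      have h0 : Tendsto (fun T : ℝ => u / T) atTop (nhds 0) :=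
        tendsto_const_nhds.div_atTop tendsto_id
      have := ((cont_pow (d - 1)).tendsto 0).comp h0
      simpa [Function.comp_def] using this
  refine key.congr' ?_
  filter_upwards [eventually_gt_atTop 0] with T hT
  exact (subst1 c d T hT).symm

lemma K_small (c d : ℂ) (hc : 1 / 2 < c.re) (hd : d.re ≤ 1) (hcd : c + d = 3 / 2) :
    Tendsto (fun T : ℝ => (T : ℂ) ^ (1 / 2 : ℂ) * K c d T) (nhdsWithin 0 (Ioi 0))
      (nhds (Complex.I ^ (d - 1) * (Real.sqrt π : ℂ))) := by
  have hre : c.re + d.re = 3 / 2 := by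
    have := congrArg Complex.re hcd
    simpa using this
  have hlim : Complex.I ^ (d - 1) * (Real.sqrt π : ℂ) = ∫ u in Ioi (0 : ℝ),
      ((Real.exp (-u) : ℝ) : ℂ) * (u : ℂ) ^ (c - 1) * (0 + Complex.I * u) ^ (d - 1) := by
    have h1 : (Real.sqrt π : ℂ) = ∫ u in Ioi (0 : ℝ), ((Real.exp (-u) : ℝ) : ℂ) *
        (u : ℂ) ^ ((1 / 2 : ℂ) - 1) := by
      have := Complex.Gamma_eq_integral (s := 1 / 2) (by norm_num)
      rw [Complex.GammaIntegral, Complex.Gamma_one_half_eq] at this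
      rw [← this, Real.sqrt_eq_rpow, Complex.ofReal_cpow Real.pi_pos.le]
      norm_num
    rw [h1, ← integral_const_mul]
    refine setIntegral_congr_fun measurableSet_Ioi fun u hu => ?_
    have hu : 0 < u := hu
    have hu' : (u : ℂ) ≠ 0 := by exact_mod_cast hu.ne'
    beta_reduce
    rw [zero_add, mul_comm Complex.I, ← scale_pow _ u hu _ Complex.I_ne_zero,
      show (1 / 2 : ℂ) - 1 = (c - 1) + (d - 1) by linear_combination -hcd,
      Complex.cpow_add _ _ hu']
    ring
  rw [hlim]
  have key : Tendsto (fun T : ℝ => ∫ u in Ioi (0 : ℝ), ((Real.exp (-u) : ℝ) : ℂ) *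
      (u : ℂ) ^ (c - 1) * (T + Complex.I * u) ^ (d - 1)) (nhdsWithin 0 (Ioi 0))
      (nhds (∫ u in Ioi (0 : ℝ),
      ((Real.exp (-u) : ℝ) : ℂ) * (u : ℂ) ^ (c - 1) * (0 + Complex.I * u) ^ (d - 1))) := by
    refine tendsto_integral_filter_of_dominated_convergence
      (fun u => Real.exp (-(1 * u)) * u ^ ((1 / 2 : ℝ) - 1) * Real.exp (π * |d.im|)) ?_ ?_ ?_ ?_
    · filter_upwards [self_mem_nhdsWithin] with T hT
      refine ContinuousOn.aestronglyMeasurable ?_ measurableSet_Ioi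
      refine ContinuousOn.mul (ContinuousOn.mul (by fun_prop) ?_) ?_
      · intro s hs
        refine ContinuousAt.continuousWithinAt ?_
        exact (Complex.continuousAt_ofReal_cpow_const s (c - 1) (Or.inr (ne_of_gt hs)))
      · refine Continuous.continuousOn ?_
        exact Continuous.cpow (by fun_prop) continuous_const fun s => slit T s hT
    · filter_upwards [self_mem_nhdsWithin] with T hT
      filter_upwards [ae_restrict_mem measurableSet_Ioi] with u hu
      rw [norm_mul, norm_mul, Complex.norm_cpow_eq_rpow_re_of_pos hu, Complex.norm_real,
        Real.norm_of_nonneg (Real.exp_pos _).le]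
      have hu : 0 < u := hu
      have h1 := norm_cpow_le (T + Complex.I * u) (d - 1) (Complex.slitPlane_ne_zero (slit T u hT))
      have h2 : u ≤ ‖(T : ℂ) + Complex.I * u‖ := by
        have := Complex.abs_im_le_norm ((T : ℂ) + Complex.I * u)
        simp [abs_of_pos hu] at this
        exact this
      have h3 : ‖(T : ℂ) + Complex.I * u‖ ^ (d - 1).re ≤ u ^ (d - 1).re :=
        Real.rpow_le_rpow_of_nonpos hu h2 (by simpa using hd)
      have h4 : u ^ ((1 / 2 : ℝ) - 1) = u ^ (c - 1).re * u ^ (d - 1).re := by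
        rw [← Real.rpow_add hu]; congr 1; simp; linarith
      have h5 : (d - 1).im = d.im := by simp
      rw [h4, one_mul, mul_assoc (Real.exp (-u)), mul_assoc (Real.exp (-u)), mul_assoc]
      rw [h5] at h1
      gcongr
      exact h1.trans (by gcongr)
    · exact (int_real (1 / 2) 1 (by norm_num) one_pos).mul_const _
    · filter_upwards [ae_restrict_mem measurableSet_Ioi] with u hu
      have hu : 0 < u := hu
      refine Tendsto.const_mul _ ?_
      have h0 : ContinuousAt (fun T : ℝ => ((T : ℂ) + Complex.I * u) ^ (d - 1)) 0 := by
        refine ContinuousAt.cpow (by fun_prop) continuousAt_const ?_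
        right; simp [hu.ne']
      have := h0.tendsto.mono_left (nhdsWithin_le_nhds (s := Ioi 0))
      simpa using this
  refine key.congr' ?_
  filter_upwards [self_mem_nhdsWithin] with T hT
  rw [← subst2 c d T hT, hcd]
  norm_num

lemma K_zero (c d : ℂ) (hc : 0 < c.re) (hc2 : c.re < 1 / 2) (hd : d.re ≤ 1) :
    Tendsto (fun t : ℝ => (t : ℂ) * K c d (t ^ 2)) (nhdsWithin 0 (Ioi 0)) (nhds 0) := by
  let C := (∫ s in Ioi (0 : ℝ), Real.exp (-s) * s ^ (c.re - 1)) * Real.exp (π * |d.im|)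
  have hb : ∀ T : ℝ, 0 < T → ‖(T : ℂ) ^ c * K c d T‖ ≤ C := by
    intro T hT
    rw [subst1 c d T hT]
    simp only [C]
    rw [← integral_mul_const]
    refine norm_integral_le_of_norm_le ?_ ?_
    · have := (int_real c.re 1 hc one_pos).mul_const (Real.exp (π * |d.im|))
      simpa using this
    · filter_upwards [ae_restrict_mem measurableSet_Ioi] with u hu
      rw [norm_mul, norm_mul, Complex.norm_cpow_eq_rpow_re_of_pos hu, Complex.norm_real,
        Real.norm_of_nonneg (Real.exp_pos _).le]
      have := bound1 d hd (u / T)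
      have hu : 0 < u := hu
      simp only [Complex.sub_re, Complex.one_re]
      gcongr
  have h0 : Tendsto (fun t : ℝ => t ^ (1 - 2 * c.re) * C) (nhdsWithin 0 (Ioi 0)) (nhds 0) := by
    have h1 : ContinuousAt (fun t : ℝ => t ^ (1 - 2 * c.re)) 0 :=
      Real.continuousAt_rpow_const _ _ (Or.inr (by linarith))
    have h2 := (h1.tendsto.mono_left (nhdsWithin_le_nhds (s := Ioi 0))).mul_const C
    rwa [Real.zero_rpow (by linarith), zero_mul] at h2
  refine squeeze_zero_norm' ?_ h0
  filter_upwards [self_mem_nhdsWithin] with t ht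
  have ht : 0 < t := ht
  have h := hb (t ^ 2) (by positivity)
  rw [norm_mul, Complex.norm_cpow_eq_rpow_re_of_pos (by positivity)] at h
  have h3 : (t ^ 2) ^ c.re = t ^ (2 * c.re) := by
    rw [← Real.rpow_natCast, ← Real.rpow_mul ht.le]; norm_num
  rw [h3] at h
  rw [norm_mul, Complex.norm_real, Real.norm_of_nonneg ht.le]
  calc t * ‖K c d (t ^ 2)‖ = t ^ (1 - 2 * c.re) * (t ^ (2 * c.re) * ‖K c d (t ^ 2)‖) := by
        rw [← mul_assoc, ← Real.rpow_add ht]; norm_num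
    _ ≤ _ := by gcongr

lemma K_small' (c d : ℂ) (hc : 1 / 2 < c.re) (hd : d.re ≤ 1) (hcd : c + d = 3 / 2) :
    Tendsto (fun t : ℝ => (t : ℂ) * K c d (t ^ 2)) (nhdsWithin 0 (Ioi 0))
      (nhds (Complex.I ^ (d - 1) * (Real.sqrt π : ℂ))) := by
  have h0 : Tendsto (fun t : ℝ => t ^ 2) (nhdsWithin 0 (Ioi 0)) (nhdsWithin 0 (Ioi 0)) := by
    refine tendsto_nhdsWithin_iff.2 ⟨?_, ?_⟩
    · have : ContinuousAt (fun t : ℝ => t ^ 2) 0 := by fun_prop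
      simpa using this.tendsto.mono_left (nhdsWithin_le_nhds (s := Ioi 0))
    · filter_upwards [self_mem_nhdsWithin] with t ht
      have ht : 0 < t := ht
      exact pow_pos ht 2
  refine ((K_small c d hc hd hcd).comp h0).congr' ?_
  filter_upwards [self_mem_nhdsWithin] with t ht
  have ht : 0 < t := ht
  simp only [Function.comp]
  have : (((t ^ 2 : ℝ) : ℂ)) ^ (1 / 2 : ℂ) = t := by
    have h := Complex.ofReal_cpow (sq_nonneg t) (1 / 2)
    rw [← Real.sqrt_eq_rpow, Real.sqrt_sq ht.le] at h
    rw [h]; norm_num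
  rw [this]

/-- Glue a function on the positive half line to a function of given parity. -/
noncomputable def glue (σ : ℝ) (f : ℝ → ℝ) (L : ℝ) (t : ℝ) : ℝ :=
  if 0 < t then f t else if t < 0 then σ * f (-t) else L

lemma glue_pos (σ : ℝ) (f : ℝ → ℝ) (L t : ℝ) (ht : 0 < t) : glue σ f L t = f t := by
  simp [glue, ht]

lemma glue_neg (σ : ℝ) (f : ℝ → ℝ) (L t : ℝ) (ht : t < 0) : glue σ f L t = σ * f (-t) := by
  simp [glue, ht, ht.le]

lemma glue_zero (σ : ℝ) (f : ℝ → ℝ) (L : ℝ) : glue σ f L 0 = L := by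
  simp [glue]

lemma glue_cont (σ : ℝ) (f : ℝ → ℝ) (L : ℝ) (hL : σ * L = L)
    (h : Tendsto f (nhdsWithin 0 (Ioi 0)) (nhds L)) : ContinuousAt (glue σ f L) 0 := by
  rw [continuousAt_iff_continuous_left'_right']
  constructor
  · unfold ContinuousWithinAt
    rw [glue_zero]
    have h1 : Tendsto (fun t : ℝ => -t) (nhdsWithin 0 (Iio 0)) (nhdsWithin 0 (Ioi 0)) := by
      simpa using tendsto_neg_nhdsLT (a := (0 : ℝ))
    have h2 := (h.comp h1).const_mul σ
    rw [hL] at h2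
    refine h2.congr' ?_
    filter_upwards [self_mem_nhdsWithin] with t ht
    exact (glue_neg σ f L t ht).symm
  · unfold ContinuousWithinAt
    rw [glue_zero]
    refine h.congr' ?_
    filter_upwards [self_mem_nhdsWithin] with t ht
    exact (glue_pos σ f L t ht).symm

lemma glue_deriv (σ : ℝ) (f f' : ℝ → ℝ) (L M : ℝ) (hL : σ * L = L) (hM : -σ * M = M)
    (hf : ∀ t, 0 < t → HasDerivAt f (f' t) t)
    (h : Tendsto f (nhdsWithin 0 (Ioi 0)) (nhds L))
    (h' : Tendsto f' (nhdsWithin 0 (Ioi 0)) (nhds M)) (t : ℝ) :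
    HasDerivAt (glue σ f L) (glue (-σ) f' M t) t := by
  have hne : ∀ y : ℝ, y ≠ 0 → HasDerivAt (glue σ f L) (glue (-σ) f' M y) y := by
    intro y hy
    rcases lt_or_gt_of_ne hy with hy | hy
    · rw [glue_neg _ _ _ _ hy]
      have h1 : HasDerivAt (fun t : ℝ => f (-t)) (-f' (-y)) y := by
        have := HasDerivAt.comp y (hf (-y) (by linarith)) (hasDerivAt_neg y)
        simpa [Function.comp_def] using this
      have h2 : HasDerivAt (fun t : ℝ => σ * f (-t)) (-σ * f' (-y)) y :=
        (h1.const_mul σ).congr_deriv (by ring)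
      refine h2.congr_of_eventuallyEq ?_
      filter_upwards [Iio_mem_nhds hy] with t ht
      exact glue_neg σ f L t ht
    · rw [glue_pos _ _ _ _ hy]
      refine (hf y hy).congr_of_eventuallyEq ?_
      filter_upwards [Ioi_mem_nhds hy] with t ht
      exact glue_pos σ f L t ht
  rcases eq_or_ne t 0 with rfl | ht
  · exact hasDerivAt_of_hasDerivAt_of_ne hne (glue_cont σ f L hL h) (glue_cont _ f' M hM h')
  · exact hne t ht

lemma exists_lim (f f' : ℝ → ℝ) (M : ℝ) (hf : ∀ t, 0 < t → HasDerivAt f (f' t) t)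
    (h' : Tendsto f' (nhdsWithin 0 (Ioi 0)) (nhds M)) :
    ∃ L, Tendsto f (nhdsWithin 0 (Ioi 0)) (nhds L) := by
  have hb : ∀ᶠ t in nhdsWithin (0 : ℝ) (Ioi 0), ‖f' t‖ < ‖M‖ + 1 :=
    h'.norm.eventually (gt_mem_nhds (by linarith))
  obtain ⟨r, hr, hrb⟩ := mem_nhdsGT_iff_exists_Ioo_subset.1 hb
  have hr : 0 < r := hr
  have hlip : LipschitzOnWith ⟨‖M‖ + 1, by positivity⟩ f (Ioo 0 r) := by
    refine (convex_Ioo 0 r).lipschitzOnWith_of_nnnorm_hasDerivWithin_le (f' := f') ?_ ?_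
    · intro x hx
      exact (hf x hx.1).hasDerivWithinAt
    · intro x hx
      have := hrb hx
      exact (le_of_lt this : ‖f' x‖ ≤ ‖M‖ + 1)
  obtain ⟨g, hg, hfg⟩ := hlip.extend_real
  refine ⟨g 0, ?_⟩
  refine (hg.continuous.continuousAt.tendsto.mono_left (nhdsWithin_le_nhds (s := Ioi 0))).congr' ?_
  filter_upwards [Ioo_mem_nhdsGT hr] with t ht
  exact (hfg ht).symm

lemma extend (δ σ : ℝ) (x v : ℝ → ℝ) (L M : ℝ) (hσ : σ * σ = 1) (hL : σ * L = L) (hM : -σ * M = M)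
    (hx : ∀ t, 0 < t → HasDerivAt x (v t) t)
    (hv : ∀ t, 0 < t → HasDerivAt v (-((t ^ 2 + δ ^ 2) * x t)) t)
    (h : Tendsto x (nhdsWithin 0 (Ioi 0)) (nhds L))
    (h' : Tendsto v (nhdsWithin 0 (Ioi 0)) (nhds M)) :
    ∃ X V : ℝ → ℝ, (∀ t, HasDerivAt X (V t) t) ∧
      (∀ t, HasDerivAt V (-((t ^ 2 + δ ^ 2) * X t)) t) ∧ (∀ t, X (-t) = σ * X t) ∧
      (∀ t, 0 < t → X t = x t) ∧ (∀ t, 0 < t → V t = v t) := by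
  have h2 : Tendsto (fun t => -((t ^ 2 + δ ^ 2) * x t)) (nhdsWithin 0 (Ioi 0))
      (nhds (-((0 ^ 2 + δ ^ 2) * L))) := by
    refine (Tendsto.mul ?_ h).neg
    have : ContinuousAt (fun t : ℝ => t ^ 2 + δ ^ 2) 0 := by fun_prop
    exact this.tendsto.mono_left nhdsWithin_le_nhds
  refine ⟨glue σ x L, glue (-σ) v M, glue_deriv σ x v L M hL hM hx h h', ?_, ?_,
    glue_pos σ x L, glue_pos _ v M⟩
  · intro t
    have := glue_deriv (-σ) v (fun t => -((t ^ 2 + δ ^ 2) * x t)) M _ hM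
      (by linear_combination (-((0 ^ 2 + δ ^ 2))) * hL) hv h' h2 t
    convert this using 1
    rcases lt_trichotomy t 0 with ht | rfl | ht
    · rw [glue_neg _ _ _ _ ht, glue_neg _ _ _ _ ht]; ring
    · rw [glue_zero, glue_zero]
    · rw [glue_pos _ _ _ _ ht, glue_pos _ _ _ _ ht]
  · intro t
    rcases lt_trichotomy t 0 with ht | rfl | ht
    · rw [glue_neg _ _ _ t ht, glue_pos _ _ _ (-t) (by linarith)]
      linear_combination (-x (-t)) * hσ
    · rw [neg_zero, glue_zero, hL]
    · rw [glue_pos _ _ _ t ht, glue_neg _ _ _ (-t) (by linarith), neg_neg]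

/-- The oscillating factor `exp(i t²/2)`. -/
noncomputable def E (t : ℝ) : ℂ := Complex.exp (Complex.I * (t : ℂ) ^ 2 / 2)

/-- Basic building block `E(t) K(t²)`. -/
noncomputable def u (c d : ℂ) (t : ℝ) : ℂ := E t * K c d (t ^ 2)

/-- Its derivative. -/
noncomputable def u1 (c d : ℂ) (t : ℝ) : ℂ :=
  E t * (Complex.I * t * K c d (t ^ 2) - 2 * t * K (c + 1) d (t ^ 2))

/-- Its second derivative. -/
noncomputable def u2 (c d : ℂ) (t : ℝ) : ℂ :=
  E t * (-(t : ℂ) ^ 2 * K c d (t ^ 2) - 4 * Complex.I * t ^ 2 * K (c + 1) d (t ^ 2)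
    + Complex.I * K c d (t ^ 2) - 2 * K (c + 1) d (t ^ 2) + 4 * t ^ 2 * K (c + 1 + 1) d (t ^ 2))

lemma E_deriv (t : ℝ) : HasDerivAt E (Complex.I * t * E t) t := by
  have h : HasDerivAt (fun z : ℂ => Complex.exp (Complex.I * z ^ 2 / 2))
      (Complex.exp (Complex.I * (t : ℂ) ^ 2 / 2) *
        (Complex.I * (((2 : ℕ) : ℂ) * (t : ℂ) ^ (2 - 1)) / 2)) (t : ℂ) :=
    (((hasDerivAt_pow 2 (t : ℂ)).const_mul Complex.I).div_const 2).cexp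
  refine h.comp_ofReal.congr_deriv ?_
  unfold E
  push_cast
  ring

lemma Ksq_deriv (c d : ℂ) (hc : 0 < c.re) (hd : d.re ≤ 1) (t : ℝ) (ht : 0 < t) :
    HasDerivAt (fun t : ℝ => K c d (t ^ 2)) (-2 * t * K (c + 1) d (t ^ 2)) t := by
  have h := (hasDeriv_K c d hc hd (t ^ 2) (by positivity)).scomp t (hasDerivAt_pow 2 t)
  refine h.congr_deriv ?_
  rw [Complex.real_smul]
  push_cast
  ring

lemma u_deriv (c d : ℂ) (hc : 0 < c.re) (hd : d.re ≤ 1) (t : ℝ) (ht : 0 < t) :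
    HasDerivAt (u c d) (u1 c d t) t := by
  refine ((E_deriv t).mul (Ksq_deriv c d hc hd t ht)).congr_deriv ?_
  unfold u1
  ring

lemma u1_deriv (c d : ℂ) (hc : 0 < c.re) (hd : d.re ≤ 1) (t : ℝ) (ht : 0 < t) :
    HasDerivAt (u1 c d) (u2 c d t) t := by
  have h0 := Ksq_deriv c d hc hd t ht
  have h1 := Ksq_deriv (c + 1) d (by simp; linarith) hd t ht
  have ht : HasDerivAt (fun t : ℝ => (t : ℂ)) 1 t := Complex.ofRealCLM.hasDerivAt
  have h2 := (E_deriv t).fun_mul (((ht.const_mul Complex.I).fun_mul h0).fun_sub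
    ((ht.const_mul 2).fun_mul h1))
  refine h2.congr_deriv ?_
  unfold u2
  linear_combination (t : ℂ) ^ 2 * K c d (t ^ 2) * E t * Complex.I_sq

lemma even_ode (δ : ℝ) (c d : ℂ) (hc : c = (1 - Complex.I * δ ^ 2) / 4) (hcd : c + d = 1 / 2)
    (hc0 : 0 < c.re) (hd : d.re ≤ 1) (t : ℝ) (ht : 0 < t) :
    u2 c d t = -((t ^ 2 + δ ^ 2 : ℝ) * u c d t) := by
  have h := K_rel c d hc0 hd (t ^ 2) (by positivity)
  have hc' : 4 * Complex.I * c = Complex.I + δ ^ 2 := by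
    rw [hc]; linear_combination -(δ : ℂ) ^ 2 * Complex.I_sq
  rw [hcd] at h
  unfold u2 u
  push_cast at h ⊢
  linear_combination 4 * Complex.I * E t * h - E t * K c d (t ^ 2) * hc'
    + E t * (4 * t ^ 2 * K (c + 1 + 1) d (t ^ 2) - 2 * K (c + 1) d (t ^ 2)) * Complex.I_sq

lemma odd_ode (δ : ℝ) (c d : ℂ) (hc : c = (3 - Complex.I * δ ^ 2) / 4) (hcd : c + d = 3 / 2)
    (hc0 : 0 < c.re) (hd : d.re ≤ 1) (t : ℝ) (ht : 0 < t) :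
    2 * u1 c d t + t * u2 c d t = -((t ^ 2 + δ ^ 2 : ℝ) * (t * u c d t)) := by
  have h := K_rel c d hc0 hd (t ^ 2) (by positivity)
  have hc' : 4 * Complex.I * c = 3 * Complex.I + δ ^ 2 := by
    rw [hc]; linear_combination -(δ : ℂ) ^ 2 * Complex.I_sq
  rw [hcd] at h
  unfold u2 u1 u
  push_cast at h ⊢
  linear_combination 4 * t * Complex.I * E t * h - t * E t * K c d (t ^ 2) * hc'
    + t * E t * (4 * t ^ 2 * K (c + 1 + 1) d (t ^ 2) - 6 * K (c + 1) d (t ^ 2)) * Complex.I_sq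

lemma re_deriv (α : ℂ) (w : ℝ → ℂ) (w' : ℂ) (t : ℝ) (h : HasDerivAt w w' t) :
    HasDerivAt (fun t => (α * w t).re) (α * w').re t := by
  have := Complex.reCLM.hasFDerivAt.comp_hasDerivAt t (h.const_mul α)
  exact this

lemma asym (a η : ℂ) (ha : 0 < a.re) (θ : ℝ → ℝ) (H : ℝ → ℂ)
    (hH : Tendsto H atTop (nhds (η * (starRingEnd ℂ) (Complex.Gamma a)))) :
    Tendsto (fun t : ℝ => (((Complex.exp (Complex.I * (θ t : ℂ)) * H t).re : ℝ) : ℂ)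
      - ((Complex.normSq (Complex.Gamma a) / 2 : ℝ) : ℂ) *
        (η * (1 / Complex.Gamma a) * Complex.exp (Complex.I * (θ t : ℂ)) +
        (starRingEnd ℂ) (η * (1 / Complex.Gamma a) * Complex.exp (Complex.I * (θ t : ℂ)))))
      atTop (nhds 0) := by
  have hG : Complex.Gamma a ≠ 0 := Complex.Gamma_ne_zero_of_re_pos ha
  have h0 : Tendsto (fun t => ‖H t - η * (starRingEnd ℂ) (Complex.Gamma a)‖) atTop (nhds 0) := by
    have := (hH.sub_const (η * (starRingEnd ℂ) (Complex.Gamma a))).norm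
    simpa using this
  refine squeeze_zero_norm (fun t => ?_) h0
  have e1 : ((Complex.normSq (Complex.Gamma a) / 2 : ℝ) : ℂ) *
        (η * (1 / Complex.Gamma a) * Complex.exp (Complex.I * (θ t : ℂ)) +
        (starRingEnd ℂ) (η * (1 / Complex.Gamma a) * Complex.exp (Complex.I * (θ t : ℂ))))
      = (((Complex.exp (Complex.I * (θ t : ℂ)) * (η * (starRingEnd ℂ) (Complex.Gamma a))).re : ℝ) : ℂ) := by
    rw [Complex.add_conj, ← Complex.ofReal_mul]
    congr 1
    have : Complex.exp (Complex.I * (θ t : ℂ)) * (η * (starRingEnd ℂ) (Complex.Gamma a)) =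
        ((Complex.normSq (Complex.Gamma a) : ℝ) : ℂ) *
          (η * (1 / Complex.Gamma a) * Complex.exp (Complex.I * (θ t : ℂ))) := by
      rw [← Complex.mul_conj]; field_simp
    rw [this, Complex.re_ofReal_mul]
    ring
  rw [e1, ← Complex.ofReal_sub, ← Complex.sub_re, ← mul_sub, Complex.norm_real]
  refine (Complex.abs_re_le_norm _).trans ?_
  rw [norm_mul, mul_comm Complex.I, Complex.norm_exp_ofReal_mul_I, one_mul]

lemma phase (t : ℝ) (ht : 0 < t) (c : ℂ) (p δ : ℝ) (hc : 2 * c = p - Complex.I * δ ^ 2 / 2) :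
    ((t ^ p : ℝ) : ℂ) * E t =
      Complex.exp (Complex.I * ((t ^ 2 / 2 + δ ^ 2 / 2 * Real.log t : ℝ) : ℂ))
        * ((t ^ 2 : ℝ) : ℂ) ^ c := by
  have h2 : ((t ^ 2 : ℝ) : ℂ) ≠ 0 := by exact_mod_cast (pow_pos ht 2).ne'
  have h3 : Complex.log ((t ^ 2 : ℝ) : ℂ) = 2 * (Real.log t : ℂ) := by
    rw [← Complex.ofReal_log (sq_nonneg t), Real.log_pow]; push_cast; ring
  rw [Complex.cpow_def_of_ne_zero h2, h3, Real.rpow_def_of_pos ht, E, Complex.ofReal_exp,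
    ← Complex.exp_add, ← Complex.exp_add]
  congr 1
  push_cast
  linear_combination -(Real.log t : ℂ) * hc

lemma theta_exp (φ β : ℝ) : Complex.exp (Complex.I * ((φ - β : ℝ) : ℂ)) =
    Complex.exp (-(Complex.I * β)) * Complex.exp (Complex.I * (φ : ℂ)) := by
  rw [← Complex.exp_add]; congr 1; push_cast; ring

lemma tendsto_sq_atTop : Tendsto (fun t : ℝ => t ^ 2) atTop atTop :=
  tendsto_pow_atTop (by norm_num)

lemma G1_lim (c d : ℂ) (hc : 0 < c.re) (hd : d.re ≤ 1) :
    Tendsto (fun t : ℝ => ((t ^ 2 : ℝ) : ℂ) ^ c * K (c + 1) d (t ^ 2)) atTop (nhds 0) := by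
  have h1 := (K_large (c + 1) d (by simp; linarith) hd).comp tendsto_sq_atTop
  have h2 : Tendsto (fun t : ℝ => (((t ^ 2)⁻¹ : ℝ) : ℂ)) atTop (nhds 0) := by
    have := (Complex.continuous_ofReal.tendsto 0).comp (tendsto_inv_atTop_zero.comp tendsto_sq_atTop)
    simpa [Function.comp_def] using this
  have h3 := h2.mul h1
  rw [zero_mul] at h3
  refine h3.congr' ?_
  filter_upwards [eventually_gt_atTop 0] with t ht
  have h4 : ((t ^ 2 : ℝ) : ℂ) ≠ 0 := by exact_mod_cast (pow_pos ht 2).ne'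
  simp only [Function.comp]
  rw [Complex.cpow_add _ _ h4, Complex.cpow_one, Complex.ofReal_inv]
  field_simp

lemma I_pow (x y : ℝ) : Complex.I ^ ((x : ℂ) + Complex.I * y) =
    ((Real.exp (-(π / 2 * y)) : ℝ) : ℂ) * Complex.exp (Complex.I * ((π / 2 * x : ℝ) : ℂ)) := by
  rw [Complex.cpow_def_of_ne_zero Complex.I_ne_zero, Complex.log_I, Complex.ofReal_exp,
    ← Complex.exp_add]
  congr 1
  push_cast
  linear_combination (π / 2 * y : ℂ) * Complex.I_sq

lemma E_zero : Tendsto E (nhdsWithin 0 (Ioi 0)) (nhds 1) := by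
  have : Continuous E := by unfold E; fun_prop
  have h := (this.tendsto 0).mono_left (nhdsWithin_le_nhds (s := Ioi 0))
  simpa [E] using h

lemma tendsto_re (l : Filter ℝ) (f : ℝ → ℂ) (z : ℂ) (h : Tendsto f l (nhds z)) (r : ℝ)
    (hr : z.re = r) : Tendsto (fun t => (f t).re) l (nhds r) := by
  rw [← hr]
  exact (Complex.continuous_re.tendsto z).comp h

lemma even_sol (δ : ℝ) (a : ℂ) (ha : a = (1 + Complex.I * (δ : ℂ) ^ 2) / 4) :
    ∃ X V : ℝ → ℝ, (∀ t, HasDerivAt X (V t) t) ∧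
      (∀ t, HasDerivAt V (-((t ^ 2 + δ ^ 2) * X t)) t) ∧ (∀ t, X (-t) = 1 * X t) ∧
      ∃ H H1 : ℝ → ℂ, Tendsto H atTop (nhds (1 * (starRingEnd ℂ) (Complex.Gamma a))) ∧
        Tendsto H1 atTop (nhds (Complex.I * (starRingEnd ℂ) (Complex.Gamma a))) ∧
        ∀ t, 0 < t →
          Real.sqrt t * X t = (Complex.exp (Complex.I *
            ((t ^ 2 / 2 + δ ^ 2 / 2 * Real.log t - π / 8 : ℝ) : ℂ)) * H t).re ∧
          V t / Real.sqrt t = (Complex.exp (Complex.I *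
            ((t ^ 2 / 2 + δ ^ 2 / 2 * Real.log t - π / 8 : ℝ) : ℂ)) * H1 t).re := by
  obtain ⟨c, hc⟩ : ∃ c : ℂ, c = (1 - Complex.I * δ ^ 2) / 4 := ⟨_, rfl⟩
  obtain ⟨d, hd⟩ : ∃ d : ℂ, d = (1 + Complex.I * δ ^ 2) / 4 := ⟨_, rfl⟩
  have hca : c = (starRingEnd ℂ) a := by rw [hc, ha]; simp [sub_eq_add_neg, map_ofNat]
  have hcd : c + d = 1 / 2 := by rw [hc, hd]; ring
  have hcre : c.re = 1 / 4 := by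
    rw [show c = ((1 / 4 : ℝ) : ℂ) - Complex.I * ((δ ^ 2 / 4 : ℝ) : ℂ) by rw [hc]; push_cast; ring]
    simp only [Complex.sub_re, Complex.add_re, Complex.mul_re, Complex.ofReal_re, Complex.ofReal_im,
      Complex.I_re, Complex.I_im]
    ring
  have hdre : d.re = 1 / 4 := by
    rw [show d = ((1 / 4 : ℝ) : ℂ) + Complex.I * ((δ ^ 2 / 4 : ℝ) : ℂ) by rw [hd]; push_cast; ring]
    simp only [Complex.sub_re, Complex.add_re, Complex.mul_re, Complex.ofReal_re, Complex.ofReal_im,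
      Complex.I_re, Complex.I_im]
    ring
  have hc0 : 0 < c.re := by rw [hcre]; norm_num
  have hd1 : d.re ≤ 1 := by rw [hdre]; norm_num
  let α : ℂ := Complex.exp (-(Complex.I * (π / 8 : ℝ)))
  have hx : ∀ t, 0 < t → HasDerivAt (fun t => (α * u c d t).re) ((α * u1 c d t).re) t :=
    fun t ht => re_deriv α _ _ t (u_deriv c d hc0 hd1 t ht)
  have hv : ∀ t, 0 < t → HasDerivAt (fun t => (α * u1 c d t).re)
      (-((t ^ 2 + δ ^ 2) * (α * u c d t).re)) t := by
    intro t ht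
    refine (re_deriv α _ _ t (u1_deriv c d hc0 hd1 t ht)).congr_deriv ?_
    rw [even_ode δ c d hc hcd hc0 hd1 t ht, mul_neg, Complex.neg_re, mul_left_comm,
      Complex.re_ofReal_mul]
  have hv0 : Tendsto (fun t => (α * u1 c d t).re) (nhdsWithin 0 (Ioi 0)) (nhds 0) := by
    have k0 := K_zero c d hc0 (by rw [hcre]; norm_num) hd1
    have k1 := K_small' (c + 1) d (by simp; linarith) hd1 (by linear_combination hcd)
    have h1 : Tendsto (u1 c d) (nhdsWithin 0 (Ioi 0))
        (nhds (1 * (Complex.I * 0 - 2 * (Complex.I ^ (d - 1) * (Real.sqrt π : ℂ))))) := by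
      refine (E_zero.mul ((k0.const_mul Complex.I).sub (k1.const_mul 2))).congr fun t => ?_
      unfold u1; ring
    refine tendsto_re _ _ _ (h1.const_mul α) 0 ?_
    have e1 : d - 1 = ((-3 / 4 : ℝ) : ℂ) + Complex.I * ((δ ^ 2 / 4 : ℝ) : ℂ) := by
      rw [hd]; push_cast; ring
    have e2 : α * Complex.exp (Complex.I * ((π / 2 * (-3 / 4) : ℝ) : ℂ)) = -Complex.I := by
      simp only [α]
      rw [← Complex.exp_add, ← Complex.exp_neg_pi_div_two_mul_I]
      congr 1; push_cast; ring
    rw [e1, I_pow]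
    have e3 : α * (1 * (Complex.I * 0 - 2 * (((Real.exp (-(π / 2 * (δ ^ 2 / 4))) : ℝ) : ℂ) *
        Complex.exp (Complex.I * ((π / 2 * (-3 / 4) : ℝ) : ℂ)) * (Real.sqrt π : ℂ)))) =
        ((2 * Real.exp (-(π / 2 * (δ ^ 2 / 4))) * Real.sqrt π : ℝ) : ℂ) * Complex.I := by
      push_cast
      push_cast at e2
      linear_combination (-2 * (Complex.exp (-(π / 2 * (δ ^ 2 / 4)))) * (Real.sqrt π : ℂ)) * e2
    rw [e3, Complex.re_ofReal_mul, Complex.I_re, mul_zero]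
  obtain ⟨L, hL⟩ := exists_lim _ _ 0 hx hv0
  obtain ⟨X, V, h1, h2, h3, h4, h5⟩ := extend δ 1 _ _ L 0 (by norm_num) (by ring) (by ring)
    hx hv hL hv0
  have hlim0 : Tendsto (fun t : ℝ => ((t ^ 2 : ℝ) : ℂ) ^ c * K c d (t ^ 2)) atTop
      (nhds ((starRingEnd ℂ) (Complex.Gamma a))) := by
    rw [← Complex.Gamma_conj, ← hca]
    exact (K_large c d hc0 hd1).comp tendsto_sq_atTop
  refine ⟨X, V, h1, h2, h3, fun t => ((t ^ 2 : ℝ) : ℂ) ^ c * K c d (t ^ 2),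
    fun t => Complex.I * (((t ^ 2 : ℝ) : ℂ) ^ c * K c d (t ^ 2)) -
      2 * (((t ^ 2 : ℝ) : ℂ) ^ c * K (c + 1) d (t ^ 2)), ?_, ?_, ?_⟩
  · simpa using hlim0
  · have := (hlim0.const_mul Complex.I).sub ((G1_lim c d hc0 hd1).const_mul 2)
    rwa [mul_zero, sub_zero] at this
  · intro t ht
    have hp := phase t ht c (1 / 2) δ (by rw [hc]; push_cast; ring)
    rw [← Real.sqrt_eq_rpow] at hp
    have hs : 0 < Real.sqrt t := Real.sqrt_pos.2 ht
    have hss : Real.sqrt t * Real.sqrt t = t := Real.mul_self_sqrt ht.le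
    rw [h4 t ht, h5 t ht, theta_exp]
    constructor
    · rw [← Complex.re_ofReal_mul]
      congr 1
      unfold u
      linear_combination α * K c d (t ^ 2) * hp
    · rw [div_eq_iff hs.ne', mul_comm _ (Real.sqrt t), ← Complex.re_ofReal_mul]
      congr 1
      unfold u1
      have hssc : (Real.sqrt t : ℂ) * (Real.sqrt t : ℂ) = t := by exact_mod_cast hss
      linear_combination (Real.sqrt t : ℂ) * α * (Complex.I * K c d (t ^ 2) -
        2 * K (c + 1) d (t ^ 2)) * hp -
        α * E t * (Complex.I * K c d (t ^ 2) - 2 * K (c + 1) d (t ^ 2)) * hssc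

lemma odd_sol (δ : ℝ) (a : ℂ) (ha : a = (3 + Complex.I * (δ : ℂ) ^ 2) / 4) :
    ∃ X V : ℝ → ℝ, (∀ t, HasDerivAt X (V t) t) ∧
      (∀ t, HasDerivAt V (-((t ^ 2 + δ ^ 2) * X t)) t) ∧ (∀ t, X (-t) = -1 * X t) ∧
      ∃ H H1 : ℝ → ℂ, Tendsto H atTop (nhds (1 * (starRingEnd ℂ) (Complex.Gamma a))) ∧
        Tendsto H1 atTop (nhds (Complex.I * (starRingEnd ℂ) (Complex.Gamma a))) ∧
        ∀ t, 0 < t →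
          Real.sqrt t * X t = (Complex.exp (Complex.I *
            ((t ^ 2 / 2 + δ ^ 2 / 2 * Real.log t - 3 * π / 8 : ℝ) : ℂ)) * H t).re ∧
          V t / Real.sqrt t = (Complex.exp (Complex.I *
            ((t ^ 2 / 2 + δ ^ 2 / 2 * Real.log t - 3 * π / 8 : ℝ) : ℂ)) * H1 t).re := by
  obtain ⟨c, hc⟩ : ∃ c : ℂ, c = (3 - Complex.I * δ ^ 2) / 4 := ⟨_, rfl⟩
  obtain ⟨d, hd⟩ : ∃ d : ℂ, d = (3 + Complex.I * δ ^ 2) / 4 := ⟨_, rfl⟩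
  have hca : c = (starRingEnd ℂ) a := by rw [hc, ha]; simp [sub_eq_add_neg, map_ofNat]
  have hcd : c + d = 3 / 2 := by rw [hc, hd]; ring
  have hcre : c.re = 3 / 4 := by
    rw [show c = ((3 / 4 : ℝ) : ℂ) - Complex.I * ((δ ^ 2 / 4 : ℝ) : ℂ) by rw [hc]; push_cast; ring]
    simp only [Complex.sub_re, Complex.add_re, Complex.mul_re, Complex.ofReal_re, Complex.ofReal_im,
      Complex.I_re, Complex.I_im]
    ring
  have hdre : d.re = 3 / 4 := by
    rw [show d = ((3 / 4 : ℝ) : ℂ) + Complex.I * ((δ ^ 2 / 4 : ℝ) : ℂ) by rw [hd]; push_cast; ring]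
    simp only [Complex.sub_re, Complex.add_re, Complex.mul_re, Complex.ofReal_re, Complex.ofReal_im,
      Complex.I_re, Complex.I_im]
    ring
  have hc0 : 0 < c.re := by rw [hcre]; norm_num
  have hd1 : d.re ≤ 1 := by rw [hdre]; norm_num
  let α : ℂ := Complex.exp (-(Complex.I * (3 * π / 8 : ℝ)))
  have hid : ∀ t : ℝ, HasDerivAt (fun t : ℝ => (t : ℂ)) 1 t := fun t =>
    Complex.ofRealCLM.hasDerivAt
  have hx : ∀ t, 0 < t → HasDerivAt (fun t : ℝ => (α * (t * u c d t)).re)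
      ((α * (u c d t + t * u1 c d t)).re) t := by
    intro t ht
    refine re_deriv α _ _ t (((hid t).fun_mul (u_deriv c d hc0 hd1 t ht)).congr_deriv ?_)
    ring
  have hv : ∀ t, 0 < t → HasDerivAt (fun t : ℝ => (α * (u c d t + t * u1 c d t)).re)
      (-((t ^ 2 + δ ^ 2) * (α * (t * u c d t)).re)) t := by
    intro t ht
    refine (re_deriv α _ _ t ((u_deriv c d hc0 hd1 t ht).fun_add
      ((hid t).fun_mul (u1_deriv c d hc0 hd1 t ht)))).congr_deriv ?_
    rw [show u1 c d t + (1 * u1 c d t + t * u2 c d t) = 2 * u1 c d t + t * u2 c d t by ring,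
      odd_ode δ c d hc hcd hc0 hd1 t ht, mul_neg, Complex.neg_re, mul_left_comm,
      Complex.re_ofReal_mul]
  have hx0 : Tendsto (fun t : ℝ => (α * (t * u c d t)).re) (nhdsWithin 0 (Ioi 0)) (nhds 0) := by
    have k1 := K_small' c d (by rw [hcre]; norm_num) hd1 hcd
    have h1 : Tendsto (fun t : ℝ => t * u c d t) (nhdsWithin 0 (Ioi 0))
        (nhds (1 * (Complex.I ^ (d - 1) * (Real.sqrt π : ℂ)))) := by
      refine (E_zero.mul k1).congr fun t => ?_
      unfold u; ring
    refine tendsto_re _ _ _ (h1.const_mul α) 0 ?_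
    have e1 : d - 1 = ((-1 / 4 : ℝ) : ℂ) + Complex.I * ((δ ^ 2 / 4 : ℝ) : ℂ) := by
      rw [hd]; push_cast; ring
    have e2 : α * Complex.exp (Complex.I * ((π / 2 * (-1 / 4) : ℝ) : ℂ)) = -Complex.I := by
      simp only [α]
      rw [← Complex.exp_add, ← Complex.exp_neg_pi_div_two_mul_I]
      congr 1; push_cast; ring
    rw [e1, I_pow]
    have e3 : α * (1 * (((Real.exp (-(π / 2 * (δ ^ 2 / 4))) : ℝ) : ℂ) *
        Complex.exp (Complex.I * ((π / 2 * (-1 / 4) : ℝ) : ℂ)) * (Real.sqrt π : ℂ))) =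
        ((-Real.exp (-(π / 2 * (δ ^ 2 / 4))) * Real.sqrt π : ℝ) : ℂ) * Complex.I := by
      push_cast
      push_cast at e2
      linear_combination ((Complex.exp (-(π / 2 * (δ ^ 2 / 4)))) * (Real.sqrt π : ℂ)) * e2
    rw [e3, Complex.re_ofReal_mul, Complex.I_re, mul_zero]
  have hv0 : Tendsto (fun t : ℝ => -((t ^ 2 + δ ^ 2) * (α * (t * u c d t)).re))
      (nhdsWithin 0 (Ioi 0)) (nhds (-((0 ^ 2 + δ ^ 2) * 0))) := by
    refine (Tendsto.mul ?_ hx0).neg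
    have : ContinuousAt (fun t : ℝ => t ^ 2 + δ ^ 2) 0 := by fun_prop
    exact this.tendsto.mono_left nhdsWithin_le_nhds
  obtain ⟨M, hM⟩ := exists_lim _ _ _ hv hv0
  obtain ⟨X, V, h1, h2, h3, h4, h5⟩ := extend δ (-1) _ _ 0 M (by norm_num) (by ring) (by ring)
    hx hv hx0 hM
  have hlim0 : Tendsto (fun t : ℝ => ((t ^ 2 : ℝ) : ℂ) ^ c * K c d (t ^ 2)) atTop
      (nhds ((starRingEnd ℂ) (Complex.Gamma a))) := by
    rw [← Complex.Gamma_conj, ← hca]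
    exact (K_large c d hc0 hd1).comp tendsto_sq_atTop
  have hinv : Tendsto (fun t : ℝ => (((t ^ 2)⁻¹ : ℝ) : ℂ)) atTop (nhds 0) := by
    have := (Complex.continuous_ofReal.tendsto 0).comp (tendsto_inv_atTop_zero.comp tendsto_sq_atTop)
    simpa [Function.comp_def] using this
  refine ⟨X, V, h1, h2, h3, fun t => ((t ^ 2 : ℝ) : ℂ) ^ c * K c d (t ^ 2),
    fun t => Complex.I * (((t ^ 2 : ℝ) : ℂ) ^ c * K c d (t ^ 2)) -
      2 * (((t ^ 2 : ℝ) : ℂ) ^ c * K (c + 1) d (t ^ 2)) +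
      (((t ^ 2)⁻¹ : ℝ) : ℂ) * (((t ^ 2 : ℝ) : ℂ) ^ c * K c d (t ^ 2)), ?_, ?_, ?_⟩
  · simpa using hlim0
  · have := ((hlim0.const_mul Complex.I).sub ((G1_lim c d hc0 hd1).const_mul 2)).add
      (hinv.mul hlim0)
    rwa [mul_zero, sub_zero, zero_mul, add_zero] at this
  · intro t ht
    have hp := phase t ht c (3 / 2) δ (by rw [hc]; push_cast; ring)
    have hs : 0 < Real.sqrt t := Real.sqrt_pos.2 ht
    have hss : Real.sqrt t * Real.sqrt t = t := Real.mul_self_sqrt ht.le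
    have hp32 : t ^ (3 / 2 : ℝ) = t * Real.sqrt t := by
      rw [Real.sqrt_eq_rpow, show (3 / 2 : ℝ) = 1 + 1 / 2 by norm_num, Real.rpow_add ht,
        Real.rpow_one]
    rw [hp32, Complex.ofReal_mul] at hp
    rw [h4 t ht, h5 t ht, theta_exp]
    constructor
    · rw [← Complex.re_ofReal_mul]
      congr 1
      unfold u
      linear_combination α * K c d (t ^ 2) * hp
    · rw [div_eq_iff hs.ne', mul_comm _ (Real.sqrt t), ← Complex.re_ofReal_mul]
      congr 1
      unfold u1 u
      have hssc : (Real.sqrt t : ℂ) * (Real.sqrt t : ℂ) = t := by exact_mod_cast hss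
      have hti : (t : ℂ) ^ 2 * (((t ^ 2)⁻¹ : ℝ) : ℂ) = 1 := by
        have : t ^ 2 * (t ^ 2)⁻¹ = 1 := by field_simp
        exact_mod_cast this
      linear_combination (Real.sqrt t : ℂ) * α * (Complex.I * K c d (t ^ 2) -
        2 * K (c + 1) d (t ^ 2) + (((t ^ 2)⁻¹ : ℝ) : ℂ) * K c d (t ^ 2)) * hp -
        t * α * E t * (Complex.I * K c d (t ^ 2) - 2 * K (c + 1) d (t ^ 2) +
          (((t ^ 2)⁻¹ : ℝ) : ℂ) * K c d (t ^ 2)) * hssc - α * E t * K c d (t ^ 2) * hti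

/-- The asymptotic value of the Wronskian is nonzero. -/
lemma wronsk_ne (δ : ℝ) (a b : ℂ) (ha : a = (1 + Complex.I * (δ : ℂ) ^ 2) / 4)
    (hb : b = (3 + Complex.I * (δ : ℂ) ^ 2) / 4) :
    0 < (Complex.exp (Complex.I * (π / 4 : ℝ)) * ((1 / Complex.Gamma a) *
      (starRingEnd ℂ) (1 / Complex.Gamma b))).im := by
  have h1 : (starRingEnd ℂ) b = 1 - a := by
    rw [ha, hb]; simp [map_ofNat]; ring
  have h2 : (1 / Complex.Gamma a) * (starRingEnd ℂ) (1 / Complex.Gamma b) =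
      Complex.sin (π * a) / π := by
    rw [map_div₀, map_one, ← Complex.Gamma_conj, h1, div_mul_div_comm, one_mul,
      Complex.Gamma_mul_Gamma_one_sub, one_div_div]
  rw [h2]
  have h3 : (π : ℂ) * a = ((π / 4 : ℝ) : ℂ) + ((π * δ ^ 2 / 4 : ℝ) : ℂ) * Complex.I := by
    rw [ha]; push_cast; ring
  rw [h3, Complex.sin_add_mul_I, mul_comm Complex.I, Complex.exp_mul_I, ← mul_div_assoc,
    Complex.div_ofReal_im]
  refine div_pos ?_ Real.pi_pos
  rw [← Complex.ofReal_sin, ← Complex.ofReal_cos, ← Complex.ofReal_cosh, ← Complex.ofReal_sinh,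
    Real.sin_pi_div_four, Real.cos_pi_div_four]
  have h4 : ((((Real.sqrt 2 / 2 : ℝ) : ℂ) + ((Real.sqrt 2 / 2 : ℝ) : ℂ) * Complex.I) *
    (((Real.sqrt 2 / 2 : ℝ) : ℂ) * (Real.cosh (π * δ ^ 2 / 4) : ℂ) +
      ((Real.sqrt 2 / 2 : ℝ) : ℂ) * (Real.sinh (π * δ ^ 2 / 4) : ℂ) * Complex.I)).im =
      (Real.sqrt 2 / 2) ^ 2 * (Real.cosh (π * δ ^ 2 / 4) + Real.sinh (π * δ ^ 2 / 4)) := by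
    simp only [Complex.mul_im, Complex.add_im, Complex.add_re, Complex.mul_re, Complex.ofReal_re,
      Complex.ofReal_im, Complex.I_re, Complex.I_im]
    ring
  rw [h4, Real.cosh_add_sinh]
  positivity

lemma re_mul_re (z w : ℂ) :
    z.re * w.re = ((z * w).re + (z * (starRingEnd ℂ) w).re) / 2 := by
  simp [Complex.mul_re]

lemma wlim (k : ℝ) (θ : ℝ → ℝ) (H H1 G G1 : ℝ → ℂ) (h g : ℂ) (φ : ℝ → ℝ) (r : ℝ)
    (hθ : ∀ t, φ t = θ t - r)
    (hH : Tendsto H atTop (nhds (1 * h))) (hH1 : Tendsto H1 atTop (nhds (Complex.I * h)))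
    (hG : Tendsto G atTop (nhds (1 * g))) (hG1 : Tendsto G1 atTop (nhds (Complex.I * g)))
    (hk : ∀ t, 0 < t → k =
      (Complex.exp (Complex.I * (θ t : ℂ)) * H t).re * (Complex.exp (Complex.I * (φ t : ℂ)) * G1 t).re -
      (Complex.exp (Complex.I * (θ t : ℂ)) * H1 t).re * (Complex.exp (Complex.I * (φ t : ℂ)) * G t).re) :
    k = (Complex.exp (Complex.I * (r : ℂ)) * (h * (starRingEnd ℂ) g)).im := by
  have hconj : ∀ (f : ℝ → ℂ) (z : ℂ), Tendsto f atTop (nhds z) →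
      Tendsto (fun t => (starRingEnd ℂ) (f t)) atTop (nhds ((starRingEnd ℂ) z)) := fun f z hf =>
    (Complex.continuous_conj.tendsto z).comp hf
  have l1 : Tendsto (fun t => H t * G1 t - H1 t * G t) atTop (nhds 0) := by
    have := (hH.mul hG1).sub (hH1.mul hG)
    rwa [show 1 * h * (Complex.I * g) - Complex.I * h * (1 * g) = 0 by ring] at this
  have l2 : Tendsto (fun t => H t * (starRingEnd ℂ) (G1 t) - H1 t * (starRingEnd ℂ) (G t)) atTop
      (nhds (-2 * Complex.I * (h * (starRingEnd ℂ) g))) := by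
    have := (hH.mul (hconj _ _ hG1)).sub (hH1.mul (hconj _ _ hG))
    rwa [show 1 * h * (starRingEnd ℂ) (Complex.I * g) - Complex.I * h * (starRingEnd ℂ) (1 * g) =
      -2 * Complex.I * (h * (starRingEnd ℂ) g) by rw [map_mul, map_mul, Complex.conj_I, map_one]; ring]
      at this
  have l3 : Tendsto (fun t => (Complex.exp (Complex.I * (θ t : ℂ)) *
      Complex.exp (Complex.I * (φ t : ℂ)) * (H t * G1 t - H1 t * G t)).re) atTop (nhds 0) := by
    refine squeeze_zero_norm (fun t => ?_) (by simpa using l1.norm)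
    refine (Complex.abs_re_le_norm _).trans ?_
    rw [norm_mul, norm_mul, mul_comm Complex.I, Complex.norm_exp_ofReal_mul_I, mul_comm Complex.I,
      Complex.norm_exp_ofReal_mul_I, one_mul, one_mul]
  have l4 := tendsto_re _ _ _ (l2.const_mul (Complex.exp (Complex.I * (r : ℂ)))) _ rfl
  have l5 := (l3.add l4).div_const 2
  have l6 : Tendsto (fun _ : ℝ => k) atTop (nhds k) := tendsto_const_nhds
  have hval := tendsto_nhds_unique (l6.congr' ?_) l5
  · rw [hval]
    rw [show Complex.exp (Complex.I * (r : ℂ)) * (-2 * Complex.I * (h * (starRingEnd ℂ) g)) =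
      ((-2 : ℝ) : ℂ) * (Complex.exp (Complex.I * (r : ℂ)) * (h * (starRingEnd ℂ) g) * Complex.I) by
        push_cast; ring, Complex.re_ofReal_mul, Complex.mul_I_re]
    ring
  · filter_upwards [eventually_gt_atTop 0] with t ht
    have e1 : Complex.exp (Complex.I * (θ t : ℂ)) *
        (starRingEnd ℂ) (Complex.exp (Complex.I * (φ t : ℂ))) = Complex.exp (Complex.I * (r : ℂ)) := by
      rw [← Complex.exp_conj, ← Complex.exp_add, hθ t, map_mul, Complex.conj_I, Complex.conj_ofReal]
      congr 1; push_cast; ring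
    rw [hk t ht, re_mul_re, re_mul_re, ← e1]
    simp only [map_mul]
    rw [← sub_div, ← Complex.add_re, ← Complex.add_re, ← Complex.add_re, ← Complex.sub_re]
    congr 2
    ring

lemma wr_const (δ : ℝ) (X V Y W : ℝ → ℝ) (hX : ∀ t, HasDerivAt X (V t) t)
    (hV : ∀ t, HasDerivAt V (-((t ^ 2 + δ ^ 2) * X t)) t) (hY : ∀ t, HasDerivAt Y (W t) t)
    (hW : ∀ t, HasDerivAt W (-((t ^ 2 + δ ^ 2) * Y t)) t) (t : ℝ) :
    X t * W t - V t * Y t = X 0 * W 0 - V 0 * Y 0 := by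
  have h : ∀ t, HasDerivAt (fun t => X t * W t - V t * Y t) 0 t := fun t =>
    (((hX t).fun_mul (hW t)).fun_sub ((hV t).fun_mul (hY t))).congr_deriv (by ring)
  exact is_const_of_deriv_eq_zero (fun t => (h t).differentiableAt) (fun t => (h t).deriv) t 0

end GW

/-- Existence of Wronskian-normalized even/odd solutions of the gapped
Weber equation `ẍ + (t² + δ²)x = 0`, with asymptotics expressed through
`γ₊ = 1/Γ((1+iδ²)/4)`, `γ₋ = 1/Γ((3+iδ²)/4)` and WKB phases
`θ_±(t) = t²/2 + (δ²/2)log t − π/8` resp. `− 3π/8`. -/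
theorem gapped_weber_solutions_asymptotics (δ : ℝ) :
    ∃ (xp vp xm vm : ℝ → ℝ) (ap am : ℝ),
      ap ≠ 0 ∧ am ≠ 0 ∧
      (∀ t, HasDerivAt xp (vp t) t) ∧
      (∀ t, HasDerivAt vp (-((t ^ 2 + δ ^ 2) * xp t)) t) ∧
      (∀ t, HasDerivAt xm (vm t) t) ∧
      (∀ t, HasDerivAt vm (-((t ^ 2 + δ ^ 2) * xm t)) t) ∧
      (∀ t, xp (-t) = xp t) ∧ (∀ t, xm (-t) = -xm t) ∧
      (∀ t, xp t * vm t - vp t * xm t = 1) ∧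
      (letI γp : ℂ := 1 / Complex.Gamma ((1 + Complex.I * (δ : ℂ) ^ 2) / 4)
       letI γm : ℂ := 1 / Complex.Gamma ((3 + Complex.I * (δ : ℂ) ^ 2) / 4)
       letI θp : ℝ → ℝ := fun t => t ^ 2 / 2 + δ ^ 2 / 2 * Real.log t - π / 8
       letI θm : ℝ → ℝ := fun t => t ^ 2 / 2 + δ ^ 2 / 2 * Real.log t - 3 * π / 8
       Tendsto (fun t : ℝ => ((Real.sqrt t * xp t : ℝ) : ℂ)
           - (ap : ℂ) * (γp * Complex.exp (Complex.I * (θp t : ℂ))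
               + (starRingEnd ℂ) (γp * Complex.exp (Complex.I * (θp t : ℂ)))))
         atTop (nhds 0) ∧
       Tendsto (fun t : ℝ => ((Real.sqrt t * xm t : ℝ) : ℂ)
           - (am : ℂ) * (γm * Complex.exp (Complex.I * (θm t : ℂ))
               + (starRingEnd ℂ) (γm * Complex.exp (Complex.I * (θm t : ℂ)))))
         atTop (nhds 0) ∧
       Tendsto (fun t : ℝ => ((vp t / Real.sqrt t : ℝ) : ℂ)
           - (ap : ℂ) * (Complex.I * γp * Complex.exp (Complex.I * (θp t : ℂ))
               + (starRingEnd ℂ) (Complex.I * γp * Complex.exp (Complex.I * (θp t : ℂ)))))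
         atTop (nhds 0) ∧
       Tendsto (fun t : ℝ => ((vm t / Real.sqrt t : ℝ) : ℂ)
           - (am : ℂ) * (Complex.I * γm * Complex.exp (Complex.I * (θm t : ℂ))
               + (starRingEnd ℂ) (Complex.I * γm * Complex.exp (Complex.I * (θm t : ℂ)))))
         atTop (nhds 0)) := by
  obtain ⟨a, ha⟩ : ∃ a : ℂ, a = (1 + Complex.I * (δ : ℂ) ^ 2) / 4 := ⟨_, rfl⟩
  obtain ⟨b, hb⟩ : ∃ b : ℂ, b = (3 + Complex.I * (δ : ℂ) ^ 2) / 4 := ⟨_, rfl⟩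
  rw [← ha, ← hb]
  have hare : 0 < a.re := by
    rw [show a = ((1 / 4 : ℝ) : ℂ) + Complex.I * ((δ ^ 2 / 4 : ℝ) : ℂ) by rw [ha]; push_cast; ring]
    simp only [Complex.add_re, Complex.mul_re, Complex.ofReal_re, Complex.ofReal_im,
      Complex.I_re, Complex.I_im]
    norm_num
  have hbre : 0 < b.re := by
    rw [show b = ((3 / 4 : ℝ) : ℂ) + Complex.I * ((δ ^ 2 / 4 : ℝ) : ℂ) by rw [hb]; push_cast; ring]
    simp only [Complex.add_re, Complex.mul_re, Complex.ofReal_re, Complex.ofReal_im,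
      Complex.I_re, Complex.I_im]
    norm_num
  have hGa : Complex.Gamma a ≠ 0 := Complex.Gamma_ne_zero_of_re_pos hare
  have hGb : Complex.Gamma b ≠ 0 := Complex.Gamma_ne_zero_of_re_pos hbre
  have hna : 0 < Complex.normSq (Complex.Gamma a) := Complex.normSq_pos.2 hGa
  have hnb : 0 < Complex.normSq (Complex.Gamma b) := Complex.normSq_pos.2 hGb
  obtain ⟨X, V, hX, hV, hXe, H, H1, hH, hH1, hXV⟩ := GW.even_sol δ a ha
  obtain ⟨Y, W, hY, hW, hYo, G, G1, hG, hG1, hYW⟩ := GW.odd_sol δ b hb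
  have hwc := GW.wr_const δ X V Y W hX hV hY hW
  obtain ⟨k, hk⟩ : ∃ k : ℝ, k = X 0 * W 0 - V 0 * Y 0 := ⟨_, rfl⟩
  rw [← hk] at hwc
  have hkval := GW.wlim k (fun t => t ^ 2 / 2 + δ ^ 2 / 2 * Real.log t - π / 8) H H1 G G1 _ _
    (fun t => t ^ 2 / 2 + δ ^ 2 / 2 * Real.log t - 3 * π / 8) (π / 4) (fun t => by ring)
    hH hH1 hG hG1 (by
      intro t ht
      have hs : Real.sqrt t ≠ 0 := (Real.sqrt_pos.2 ht).ne'
      rw [← (hXV t ht).1, ← (hXV t ht).2, ← (hYW t ht).1, ← (hYW t ht).2, ← hwc t]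
      field_simp)
  have hk0 : k ≠ 0 := by
    have h1 := GW.wronsk_ne δ a b ha hb
    have h2 : (starRingEnd ℂ) (Complex.Gamma a) *
        (starRingEnd ℂ) ((starRingEnd ℂ) (Complex.Gamma b)) =
        ((Complex.normSq (Complex.Gamma a) * Complex.normSq (Complex.Gamma b) : ℝ) : ℂ) *
        ((1 / Complex.Gamma a) * (starRingEnd ℂ) (1 / Complex.Gamma b)) := by
      have hGb' : (starRingEnd ℂ) (Complex.Gamma b) ≠ 0 := by simpa using hGb
      rw [Complex.ofReal_mul, ← Complex.mul_conj, ← Complex.mul_conj, map_div₀, map_one,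
        Complex.conj_conj]
      field_simp
    rw [h2, mul_left_comm, Complex.im_ofReal_mul] at hkval
    rw [hkval]
    positivity
  have hpos : ∀ᶠ t : ℝ in atTop, 0 < t := eventually_gt_atTop 0
  refine ⟨X, V, fun t => Y t / k, fun t => W t / k, Complex.normSq (Complex.Gamma a) / 2,
    Complex.normSq (Complex.Gamma b) / 2 / k, by positivity, by positivity, hX, hV,
    fun t => (hY t).div_const k, fun t => ((hW t).div_const k).congr_deriv (by ring),
    fun t => by rw [hXe t, one_mul], fun t => by beta_reduce; rw [hYo t]; ring, fun t => ?_, ?_, ?_, ?_, ?_⟩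
  · have := hwc t
    field_simp
    linarith
  · refine (GW.asym a 1 hare (fun t => t ^ 2 / 2 + δ ^ 2 / 2 * Real.log t - π / 8) H hH).congr' ?_
    filter_upwards [hpos] with t ht
    rw [(hXV t ht).1, one_mul]
  · have h := (GW.asym b 1 hbre (fun t => t ^ 2 / 2 + δ ^ 2 / 2 * Real.log t - 3 * π / 8) G hG).div_const (k : ℂ)
    rw [zero_div] at h
    refine h.congr' ?_
    filter_upwards [hpos] with t ht
    rw [← (hYW t ht).1, one_mul]
    push_cast
    ring
  · refine (GW.asym a Complex.I hare (fun t => t ^ 2 / 2 + δ ^ 2 / 2 * Real.log t - π / 8) H1 hH1).congr' ?_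
    filter_upwards [hpos] with t ht
    rw [(hXV t ht).2]
  · have h := (GW.asym b Complex.I hbre (fun t => t ^ 2 / 2 + δ ^ 2 / 2 * Real.log t - 3 * π / 8) G1 hG1).div_const (k : ℂ)
    rw [zero_div] at h
    refine h.congr' ?_
    filter_upwards [hpos] with t ht
    rw [← (hYW t ht).2]
    push_cast
    ring
end
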